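/- arXiv:2212.01919 — 2 statements merged into one kernel-verified Lean document; each statement's English description precedes it below -/
import Mathlib

section
/- Let h_1,...,h_m ∈ Ô_n = ℂ[[x_1,...,x_n]] and suppose there exist w = (w_1,...,w_n) ∈ ℂ^n and d = (d_1,...,d_m) ∈ ℂ^m such that δ_{S,w}(h_i) = d_i h_i for all i, where δ_{S,w} = Σ_{j=1}^n w_j x_j ∂_{x_j}. Then there exist rational weights w' = (w'_1,...,w'_n) ∈ ℚ^n and rational degrees d' = (d'_1,...,d'_m) ∈ ℚ^m such that δ_{S,w'}(h_i) = d'_i h_i for all i = 1,...,m. -/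
set_option maxHeartbeats 1000000
set_option synthInstance.maxHeartbeats 1000000

noncomputable section

/-- The ring `Ô_n = ℂ[[x₁, …, xₙ]]` of formal power series. -/
abbrev FPS (n : ℕ) : Type := MvPowerSeries (Fin n) ℂ

/-- The `i`-th partial derivative of a formal power series. -/
def fpd {n : ℕ} (i : Fin n) (f : FPS n) : FPS n :=
  fun m => ((m i : ℂ) + 1) * MvPowerSeries.coeff (R := ℂ) (m + Finsupp.single i 1) f

/-- The action `δ(f) = Σ aᵢ ∂f/∂xᵢ` of a formal vector field `δ = Σ aᵢ ∂ᵢ`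
(given by its coefficients `aᵢ ∈ Ô_n`) on a formal power series `f`. -/
def applyPS {n : ℕ} (δ : Fin n → FPS n) (f : FPS n) : FPS n := ∑ i, δ i * fpd i f

/-- The linear part `j¹δ` of a formal vector field, as the matrix `(∂δⱼ/∂xᵢ)(0)`. -/
def linPartPS {n : ℕ} (δ : Fin n → FPS n) : Matrix (Fin n) (Fin n) ℂ :=
  Matrix.of fun i j => MvPowerSeries.coeff (R := ℂ) (Finsupp.single i 1) (δ j)

/-- The semisimple (Euler) vector field `δ_S = Σ wᵢ xᵢ ∂ᵢ` attached to weights `w`. -/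
def eulerPS {n : ℕ} (w : Fin n → ℂ) : Fin n → FPS n :=
  fun j => MvPowerSeries.C (σ := Fin n) (R := ℂ) (w j) * MvPowerSeries.X j

/-- `δ(0) = 0`: all coefficients of the vector field lie in the maximal ideal. -/
def VanishAt0 {n : ℕ} (δ : Fin n → FPS n) : Prop :=
  ∀ j, MvPowerSeries.constantCoeff (σ := Fin n) (R := ℂ) (δ j) = 0

/-- Vanishing of the Lie bracket `[δ, η] = 0` of two formal vector fields,
componentwise: `δ(ηⱼ) - η(δⱼ) = 0` for all `j`. -/
def CommutePS {n : ℕ} (δ η : Fin n → FPS n) : Prop :=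
  ∀ j, applyPS δ (η j) = applyPS η (δ j)

/- Comparing coefficients, `δ_{S,w}(f) = d f` says that `⟨w, k⟩ = d` for every exponent `k` in the
support of `f`. These equations are linear in `(w, d)` with integer coefficients, so applying
a `ℚ`-linear functional to all weights and degrees preserves them. A generic functional vanishes on
none of the nonzero weights, so that the rational weights are not merely zero. -/

open MvPowerSeries

section Homogeneous

variable {σ R M N : Type*} [Semiring R] [AddCommMonoid M] [AddCommMonoid N]

/-- Weighted homogeneity of a power series, read off on its support. Mathlib's
`MvPowerSeries.IsWeightedHomogeneous` only has weights in `ℕ`; here they lie in any additive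
monoid, as in `MvPolynomial.IsWeightedHomogeneous`. -/
def IsHomogeneousOfWeight (w : σ → M) (f : MvPowerSeries σ R) (d : M) : Prop :=
  ∀ k, coeff k f ≠ 0 → Finsupp.weight w k = d

theorem map_finsuppWeight (φ : M →+ N) (w : σ → M) (k : σ →₀ ℕ) :
    φ (Finsupp.weight w k) = Finsupp.weight (φ ∘ w) k := by
  simp only [Finsupp.weight_apply, map_finsuppSum, map_nsmul, Function.comp_apply]

theorem IsHomogeneousOfWeight.map {w : σ → M} {f : MvPowerSeries σ R} {d : M}
    (hf : IsHomogeneousOfWeight w f d) (φ : M →+ N) :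
    IsHomogeneousOfWeight (φ ∘ w) f (φ d) := fun k hk => by
  rw [← map_finsuppWeight, hf k hk]

end Homogeneous

theorem derivation_sum_apply {ι R A M : Type*} [CommSemiring R] [CommSemiring A] [Algebra R A]
    [AddCommMonoid M] [Module A M] [Module R M] (s : Finset ι) (D : ι → Derivation R A M) (a : A) :
    (∑ i ∈ s, D i) a = ∑ i ∈ s, D i a := by
  have hsum := map_sum (Derivation.coeFnAddMonoidHom (R := R) (A := A) (M := M)) D s
  exact (congrFun hsum a).trans (Finset.sum_apply ..)

section EulerDerivation

variable {σ R : Type*} [CommSemiring R]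

theorem coeff_X_mul_pderiv (i : σ) (f : MvPowerSeries σ R) (k : σ →₀ ℕ) :
    coeff k (X i * pderiv R i f) = k i * coeff k f := by
  rw [X, coeff_monomial_mul]
  split_ifs with hk
  · have hki : 1 ≤ k i := by simpa using hk
    rw [one_mul, coeff_pderiv, tsub_add_cancel_of_le hk, mul_comm, Finsupp.tsub_apply,
      Finsupp.single_eq_same, ← Nat.cast_add_one, Nat.sub_add_cancel hki]
  · have hki : k i = 0 := by simpa using hk
    rw [hki, Nat.cast_zero, zero_mul]

variable [Fintype σ]

/-- The semisimple derivation `δ_{S,w} = ∑ wⱼ xⱼ ∂ⱼ` of the power series ring,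
whose eigenvectors are the weighted homogeneous series. -/
def eulerDerivation (w : σ → R) : Derivation R (MvPowerSeries σ R) (MvPowerSeries σ R) :=
  ∑ j, w j • (X j : MvPowerSeries σ R) • pderiv R j

theorem eulerDerivation_apply (w : σ → R) (f : MvPowerSeries σ R) :
    eulerDerivation w f = ∑ j, w j • (X j * pderiv R j f) := by
  rw [eulerDerivation, derivation_sum_apply]
  rfl

theorem coeff_eulerDerivation (w : σ → R) (f : MvPowerSeries σ R) (k : σ →₀ ℕ) :
    coeff k (eulerDerivation w f) = Finsupp.weight w k * coeff k f := by
  simp only [eulerDerivation_apply, map_sum, coeff_smul, coeff_X_mul_pderiv,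
    Finsupp.weight_eq_sum, nsmul_eq_mul, Finset.sum_mul]
  exact Finset.sum_congr rfl fun j _ => by ring

theorem eulerDerivation_eq_smul_iff [IsCancelMulZero R] {w : σ → R} {d : R}
    {f : MvPowerSeries σ R} :
    eulerDerivation w f = d • f ↔ IsHomogeneousOfWeight w f d := by
  simp only [MvPowerSeries.ext_iff, coeff_eulerDerivation, coeff_smul, mul_eq_mul_right_iff,
    IsHomogeneousOfWeight, or_iff_not_imp_right, ne_eq]

end EulerDerivation

theorem exists_dual_forall_apply_eq_zero_iff {ι K V : Type*} [Field K] [Infinite K]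
    [AddCommGroup V] [Module K V] [Finite ι] (v : ι → V) :
    ∃ φ : Module.Dual K V, ∀ i, φ (v i) = 0 ↔ v i = 0 := by
  obtain ⟨φ, hφ⟩ := Module.exists_dual_forall_apply_ne_zero (K := K)
    (fun i : {i // v i ≠ 0} => v i) Subtype.property
  refine ⟨φ, fun i => ⟨fun hi => ?_, fun hi => by rw [hi, map_zero]⟩⟩
  by_contra hvi
  exact hφ ⟨i, hvi⟩ hi

theorem weighted_homogeneous_rational_weights_general {σ ι K : Type*} [Fintype σ] [Field K]
    [CharZero K] (h : ι → MvPowerSeries σ K) (w : σ → K) (d : ι → K)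
    (hqh : ∀ i, eulerDerivation w (h i) = d i • h i) :
    ∃ (w' : σ → ℚ) (d' : ι → ℚ), (∀ j, w' j = 0 ↔ w j = 0) ∧
      ∀ i, eulerDerivation (fun j => (w' j : K)) (h i) = (d' i : K) • h i := by
  obtain ⟨φ, hφ⟩ := exists_dual_forall_apply_eq_zero_iff (K := ℚ) w
  let ψ : K →+ K := (Rat.castHom K).toAddMonoidHom.comp φ.toAddMonoidHom
  refine ⟨φ ∘ w, φ ∘ d, hφ, fun i => ?_⟩
  exact eulerDerivation_eq_smul_iff.mpr ((eulerDerivation_eq_smul_iff.mp (hqh i)).map ψ)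

theorem fpd_eq_pderiv {n : ℕ} (i : Fin n) (f : FPS n) : fpd i f = pderiv ℂ i f := by
  ext k
  rw [coeff_pderiv, mul_comm]
  rfl

theorem applyPS_eulerPS {n : ℕ} (w : Fin n → ℂ) (f : FPS n) :
    applyPS (eulerPS w) f = eulerDerivation w f := by
  simp only [applyPS, eulerPS, fpd_eq_pderiv, eulerDerivation_apply, smul_eq_C_mul, mul_assoc]

/-- Theorem 3.1 (e): a finite family of formal power series which is weighted homogeneous
with respect to complex weights `w` and complex degrees `d` is also weighted homogeneous
with respect to some rational weights `w'` and rational degrees `d'`. -/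
theorem weighted_homogeneous_rational_weights (n m : ℕ) (h : Fin m → FPS n)
    (w : Fin n → ℂ) (d : Fin m → ℂ)
    (hqh : ∀ i, applyPS (eulerPS w) (h i) = MvPowerSeries.C (σ := Fin n) (R := ℂ) (d i) * h i) :
    ∃ (w' : Fin n → ℚ) (d' : Fin m → ℚ),
      ∀ i, applyPS (eulerPS fun j => ((w' j : ℚ) : ℂ)) (h i) =
        MvPowerSeries.C (σ := Fin n) (R := ℂ) ((d' i : ℚ) : ℂ) * h i := by
  simp only [applyPS_eulerPS, ← smul_eq_C_mul] at hqh ⊢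
  obtain ⟨w', d', -, hrat⟩ := weighted_homogeneous_rational_weights_general h w d hqh
  exact ⟨w', d', hrat⟩

end
end

section
/- Let f ∈ m^2 ∖ m^3 have an isolated singularity at the origin, let h ∈ m^2 have an isolated singularity at the origin, and set X = h^{-1}(0). Suppose there exists δ ∈ Θ_X with δ(0) = 0 and δ(f) = f whose eigenvalues sp(δ) = (w'_1,...,w'_n) are rational and at least one of them is non-positive. Then μ_X(f) = ∞ (i.e. dim_ℂ O_n/df(Θ_X) is infinite). -/
open Filter Topology Polynomial

set_option maxHeartbeats 1000000
set_option synthInstance.maxHeartbeats 1000000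

noncomputable section

/-- The algebra structure on germs of complex valued functions. -/
instance Filter.Germ.instAlgebraComplex {α : Type*} (l : Filter α) :
    Algebra ℂ (Filter.Germ l ℂ) where
  algebraMap := (Filter.Germ.coeRingHom l).comp (algebraMap ℂ (α → ℂ))
  commutes' := fun c g => mul_comm _ _
  smul_def' := fun c g => Filter.Germ.inductionOn g fun f => rfl

/-- The local algebra `𝒪ₙ` of germs at `0 ∈ ℂⁿ` of holomorphic functions,
realized as the subalgebra of germs at `0` admitting an analytic representative. -/
def On (n : ℕ) : Subalgebra ℂ (Filter.Germ (𝓝 (0 : Fin n → ℂ)) ℂ) where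
  carrier := {g | ∃ f : (Fin n → ℂ) → ℂ,
    AnalyticAt ℂ f 0 ∧ (f : Filter.Germ (𝓝 (0 : Fin n → ℂ)) ℂ) = g}
  mul_mem' := by
    rintro a b ⟨f, hf, rfl⟩ ⟨g, hg, rfl⟩
    exact ⟨f * g, hf.mul hg, rfl⟩
  add_mem' := by
    rintro a b ⟨f, hf, rfl⟩ ⟨g, hg, rfl⟩
    exact ⟨f + g, hf.add hg, rfl⟩
  algebraMap_mem' := fun c => ⟨fun _ => c, analyticAt_const, rfl⟩

variable {n : ℕ}

/-- Existence of an analytic representative for an element of `𝒪ₙ`. -/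
lemma On.exists_rep (g : On n) : ∃ f : (Fin n → ℂ) → ℂ,
    AnalyticAt ℂ f 0 ∧ (f : Filter.Germ (𝓝 (0 : Fin n → ℂ)) ℂ) = (g : Filter.Germ _ ℂ) :=
  g.2

/-- A chosen analytic representative of a germ in `𝒪ₙ`. -/
def On.rep (g : On n) : (Fin n → ℂ) → ℂ := (On.exists_rep g).choose

lemma On.rep_analyticAt (g : On n) : AnalyticAt ℂ (On.rep g) 0 :=
  (On.exists_rep g).choose_spec.1

lemma On.rep_spec (g : On n) :
    (On.rep g : Filter.Germ (𝓝 (0 : Fin n → ℂ)) ℂ) = (g : Filter.Germ _ ℂ) :=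
  (On.exists_rep g).choose_spec.2

/-- Build an element of `𝒪ₙ` from an analytic function. -/
def mkOn {n : ℕ} (f : (Fin n → ℂ) → ℂ) (hf : AnalyticAt ℂ f 0) : On n :=
  ⟨(f : Filter.Germ (𝓝 (0 : Fin n → ℂ)) ℂ), ⟨f, hf, rfl⟩⟩

/-- The `i`-th partial derivative, as an operation on `𝒪ₙ`. -/
def pd (i : Fin n) (g : On n) : On n :=
  mkOn (fun x => fderiv ℂ (On.rep g) x (Pi.single i 1)) (by
    have h := ((ContinuousLinearMap.apply ℂ ℂ (Pi.single i 1)).analyticAt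
      (fderiv ℂ (On.rep g) 0)).comp (On.rep_analyticAt g).fderiv
    exact h)

/-- Restriction of germs at `0` to germs along a finer filter. -/
def restrictGerm {l : Filter (Fin n → ℂ)} (hl : l ≤ 𝓝 (0 : Fin n → ℂ)) :
    Filter.Germ (𝓝 (0 : Fin n → ℂ)) ℂ →+* Filter.Germ l ℂ where
  toFun g := g.compTendsto id (Filter.tendsto_id'.2 hl)
  map_one' := rfl
  map_mul' a b := Filter.Germ.inductionOn₂ a b fun f g => rfl
  map_zero' := rfl
  map_add' a b := Filter.Germ.inductionOn₂ a b fun f g => rfl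

/-- Evaluation of germs restricted along `l ≤ 𝓝 0`, as a ring homomorphism on `𝒪ₙ`. -/
def restrictOn (n : ℕ) {l : Filter (Fin n → ℂ)} (hl : l ≤ 𝓝 (0 : Fin n → ℂ)) :
    On n →+* Filter.Germ l ℂ :=
  (restrictGerm hl).comp (On n).val.toRingHom

/-- The ideal `I_X ⊆ 𝒪ₙ` of germs vanishing on a set `X` near `0`. -/
def IX (n : ℕ) (X : Set (Fin n → ℂ)) : Ideal (On n) :=
  RingHom.ker (restrictOn n (nhdsWithin_le_nhds (s := X)))

/-- The maximal ideal `𝔪 ⊂ 𝒪ₙ` of germs vanishing at the origin. -/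
def mId (n : ℕ) : Ideal (On n) :=
  RingHom.ker (restrictOn n (pure_le_nhds (0 : Fin n → ℂ)))

/-- `X` is the germ at `0` of an analytic variety: `0 ∈ X` and, near `0`, `X` coincides
with the common zero locus of finitely many holomorphic functions. -/
def IsAnalyticGermAt0 (n : ℕ) (X : Set (Fin n → ℂ)) : Prop :=
  (0 : Fin n → ℂ) ∈ X ∧
    ∃ (m : ℕ) (g : Fin m → (Fin n → ℂ) → ℂ),
      (∀ j, AnalyticAt ℂ (g j) 0) ∧
      ∀ᶠ x in 𝓝 (0 : Fin n → ℂ), (x ∈ X ↔ ∀ j, g j x = 0)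

/-- The action `δ(g) = Σ δᵢ ∂g/∂xᵢ` of a vector field `δ ∈ Θ ≅ 𝒪ₙⁿ` on `g ∈ 𝒪ₙ`. -/
def applyVF (δ : Fin n → On n) (g : On n) : On n := ∑ i, δ i * pd i g

lemma applyVF_add (a b : Fin n → On n) (g : On n) :
    applyVF (a + b) g = applyVF a g + applyVF b g := by
  simp [applyVF, add_mul, Finset.sum_add_distrib]

lemma applyVF_smul (c : On n) (a : Fin n → On n) (g : On n) :
    applyVF (c • a) g = c * applyVF a g := by
  simp [applyVF, Finset.mul_sum, smul_eq_mul, mul_assoc]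

/-- For fixed `f`, the map `δ ↦ δ(f)` as an `𝒪ₙ`-linear map `Θ → 𝒪ₙ`. -/
def gradMap (n : ℕ) (f : On n) : (Fin n → On n) →ₗ[On n] On n where
  toFun δ := applyVF δ f
  map_add' a b := applyVF_add a b f
  map_smul' c a := applyVF_smul c a f

/-- The module `Θ_X` of logarithmic vector fields of `X`, i.e. vector fields
preserving the ideal `I_X`. -/
def ThetaX (n : ℕ) (X : Set (Fin n → ℂ)) : Submodule (On n) (Fin n → On n) where
  carrier := {δ | ∀ g ∈ IX n X, applyVF δ g ∈ IX n X}
  add_mem' := by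
    intro a b ha hb g hg
    rw [applyVF_add]
    exact Ideal.add_mem _ (ha g hg) (hb g hg)
  zero_mem' := by
    intro g hg
    have h0 : applyVF (0 : Fin n → On n) g = 0 := by simp [applyVF]
    rw [h0]; exact Ideal.zero_mem _
  smul_mem' := by
    intro c a ha g hg
    rw [applyVF_smul]
    exact Ideal.mul_mem_left _ _ (ha g hg)

/-- The module `Θ_Y` of vector fields tangent to the hypersurface `Y = f⁻¹(0)`,
i.e. `δ(f) ∈ ⟨f⟩`. -/
def ThetaF (n : ℕ) (f : On n) : Submodule (On n) (Fin n → On n) :=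
  Submodule.comap (gradMap n f) (Ideal.span {f})

/-- The module `H_Y` of Hamiltonian vector fields of `f`, i.e. `δ(f) = 0`. -/
def HamF (n : ℕ) (f : On n) : Submodule (On n) (Fin n → On n) :=
  LinearMap.ker (gradMap n f)

/-- The Bruce–Roberts ideal `df(Θ_X) ⊆ 𝒪ₙ`. -/
def BRIdeal (n : ℕ) (X : Set (Fin n → ℂ)) (f : On n) : Ideal (On n) :=
  Submodule.map (gradMap n f) (ThetaX n X)

/-- The Jacobian ideal `J(f) = ⟨∂f/∂x₁, …, ∂f/∂xₙ⟩`. -/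
def Jac (n : ℕ) (f : On n) : Ideal (On n) :=
  Ideal.span (Set.range fun i => pd i f)

/-- The ideal `J(f,h)` generated by the `2×2` minors of the Jacobian matrix of `(f,h)`. -/
def Jmin (n : ℕ) (f h : On n) : Ideal (On n) :=
  Ideal.span (Set.range fun p : Fin n × Fin n => pd p.1 f * pd p.2 h - pd p.2 f * pd p.1 h)

/-- The Milnor number `μ(f)`. -/
def mu (n : ℕ) (f : On n) : ℕ := Module.finrank ℂ (On n ⧸ Jac n f)

/-- The Tjurina number `τ(f)`. -/
def tau (n : ℕ) (f : On n) : ℕ :=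
  Module.finrank ℂ (On n ⧸ (Jac n f + Ideal.span {f}))

/-- The Bruce–Roberts Milnor number `μ_X(f)`. -/
def muX (n : ℕ) (X : Set (Fin n → ℂ)) (f : On n) : ℕ :=
  Module.finrank ℂ (On n ⧸ BRIdeal n X f)

/-- The Bruce–Roberts Tjurina number `τ_X(f)`. -/
def tauX (n : ℕ) (X : Set (Fin n → ℂ)) (f : On n) : ℕ :=
  Module.finrank ℂ (On n ⧸ (BRIdeal n X f + Ideal.span {f}))

/-- The value at the origin of a germ in `𝒪ₙ`. -/
def ev0 (g : On n) : ℂ := On.rep g 0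

/-- The linear part `j¹δ` of a vector field `δ`, as the matrix `(∂δⱼ/∂xᵢ)(0)`. -/
def linPart (δ : Fin n → On n) : Matrix (Fin n) (Fin n) ℂ :=
  Matrix.of fun i j => ev0 (pd i (δ j))

/-- The eigenvalues (with multiplicities) of the linear part of `δ` are given by `w`. -/
def EigsEq (δ : Fin n → On n) (w : Fin n → ℚ) : Prop :=
  (linPart δ).charpoly = ∏ i, (Polynomial.X - Polynomial.C ((w i : ℂ)))

/-- The germ at `0` of the coordinate function `xᵢ`. -/
def coordG (i : Fin n) : On n :=
  mkOn (fun x : Fin n → ℂ => x i)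
    ((ContinuousLinearMap.proj (R := ℂ) (φ := fun _ : Fin n => ℂ) i).analyticAt _)

/-- `g` is quasihomogeneous of degree `d` with respect to the weights `w` (in the given
coordinates): the Euler identity `Σ wᵢ xᵢ ∂g/∂xᵢ = d g` holds. -/
def IsQH (n : ℕ) (w : Fin n → ℚ) (d : ℚ) (g : On n) : Prop :=
  ∑ i, (w i : ℂ) • (coordG i * pd i g) = (d : ℂ) • g

/-- A germ of a biholomorphic change of coordinates at `0 ∈ ℂⁿ`. -/
structure CoordChange (n : ℕ) where
  toFun : (Fin n → ℂ) → (Fin n → ℂ)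
  invFun : (Fin n → ℂ) → (Fin n → ℂ)
  analyticAt : AnalyticAt ℂ toFun 0
  inv_analyticAt : AnalyticAt ℂ invFun 0
  map_zero : toFun 0 = 0
  inv_map_zero : invFun 0 = 0
  left_inv : ∀ᶠ x in 𝓝 (0 : Fin n → ℂ), invFun (toFun x) = x
  right_inv : ∀ᶠ x in 𝓝 (0 : Fin n → ℂ), toFun (invFun x) = x

lemma CoordChange.tendsto (φ : CoordChange n) :
    Filter.Tendsto φ.toFun (𝓝 (0 : Fin n → ℂ)) (𝓝 (0 : Fin n → ℂ)) := by
  have h := φ.analyticAt.continuousAt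
  rwa [ContinuousAt, φ.map_zero] at h

/-- The pullback (composition) of a germ `g ∈ 𝒪ₙ` under a change of coordinates. -/
def pullback (φ : CoordChange n) (g : On n) : On n :=
  ⟨(g : Filter.Germ (𝓝 (0 : Fin n → ℂ)) ℂ).compTendsto φ.toFun φ.tendsto, by
    refine ⟨On.rep g ∘ φ.toFun, ?_, ?_⟩
    · have h := On.rep_analyticAt g
      rw [← φ.map_zero] at h
      exact h.comp φ.analyticAt
    · rw [← On.rep_spec g]
      exact (Filter.Germ.coe_compTendsto _ φ.tendsto).symm⟩

/-- Definition 1.1: the pair `(f, X)` is relatively quasihomogeneous with respect to the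
weights `w`: in suitable coordinates, `f` is quasihomogeneous of degree `1` and `I_X` admits
a system of quasihomogeneous generators of positive degrees, all with respect to `w`. -/
def RelQH (n : ℕ) (X : Set (Fin n → ℂ)) (f : On n) (w : Fin n → ℚ) : Prop :=
  ∃ φ : CoordChange n,
    IsQH n w 1 (pullback φ f) ∧
    ∃ (m : ℕ) (h : Fin m → On n) (d : Fin m → ℚ),
      Ideal.span (Set.range h) = IX n X ∧ (∀ j, 0 < d j) ∧
      ∀ j, IsQH n w (d j) (pullback φ (h j))

/-- The variety `X` is quasihomogeneous with respect to the weights `w`: in suitable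
coordinates, `I_X` admits a system of quasihomogeneous generators of positive degrees. -/
def VarQH (n : ℕ) (X : Set (Fin n → ℂ)) (w : Fin n → ℚ) : Prop :=
  ∃ φ : CoordChange n,
    ∃ (m : ℕ) (h : Fin m → On n) (d : Fin m → ℚ),
      Ideal.span (Set.range h) = IX n X ∧ (∀ j, 0 < d j) ∧
      ∀ j, IsQH n w (d j) (pullback φ (h j))

instance (f : On n) : HasQuotient (↥(ThetaF n f)) (Submodule ↥(On n) ↥(ThetaF n f)) :=
  Submodule.hasQuotient (R := ↥(On n)) (M := ↥(ThetaF n f))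

/-!
Let `h` be the germ of `H`. By a Hartogs argument `I_X = (h)`: a germ `g` vanishing on `X` is
divisible by `h` near every smooth point of `X`, hence off the origin, and the quotient `g / h`
extends over the origin as soon as `n > 1`, by averaging over circles. So `η h ∈ (h)` for every
`η ∈ Θ_X`; in particular `δ h = α h`.

The linear part of `δ` has a basis of generalized eigenvectors, which lifts to local coordinates `Y`
whose weights are the eigenvalues of `δ`. As `δ f = f` and `δ h = α h`, modulo a high power of `𝔪`
the germ `f` and a unit multiple of `h` are polynomials `F(Y)` and `G(Y)`, weighted homogeneous of
weights `1` and `α(0)`.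

Suppose `𝒪ₙ ⧸ df(Θ_X)` is finite-dimensional. Since `df(Θ_X) ⊆ J(f)` and
`df(Θ_X) · J(h) ⊆ J(f, h) + (h)`, the ideals `J(f)`, `J(h)` and `J(f, h) + (h)` all contain a power
of `𝔪`, so the origin is an isolated zero of the ideals of `∂F`, of `∂G, G` and of the
minors of `(∂F, ∂G)` together with `G`. By Krull's height theorem and its determinantal analogue,
each of these ideals needs enough generators that do not vanish on the coordinate subspace of all
variables of small, respectively large, weight; counting them forces every weight to have positive
real part.
-/

section Height

open MvPolynomial (idealOfVars)

variable {R : Type*} [CommRing R] {σ ι : Type*} {K : Type*} [Field K]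

lemma ker_constantCoeff_eq_idealOfVars :
    RingHom.ker (MvPolynomial.constantCoeff (R := R) (σ := σ)) = idealOfVars σ R := by
  ext p
  rw [RingHom.mem_ker, ← pow_one (idealOfVars σ R), MvPolynomial.mem_pow_idealOfVars_iff']
  simp [Finsupp.degree_eq_zero_iff, MvPolynomial.constantCoeff_eq]

instance isMaximal_idealOfVars : (idealOfVars σ K).IsMaximal := by
  rw [← ker_constantCoeff_eq_idealOfVars]
  exact RingHom.ker_isMaximal_of_surjective _ fun c => ⟨MvPolynomial.C c, by simp⟩

variable (σ K) in
lemma height_idealOfVars [Finite σ] : (idealOfVars σ K).height = Nat.card σ := by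
  induction σ using Finite.induction_empty_option with
  | of_equiv e ih =>
    rw [← Nat.card_congr e, ← ih, ← RingEquiv.height_comap
      (MvPolynomial.renameEquiv K e).toRingEquiv]
    congr 1
    ext p
    simp [← ker_constantCoeff_eq_idealOfVars, RingHom.mem_ker]
  | h_empty =>
    simp [MvPolynomial.idealOfVars, Set.range_eq_empty]
  | h_option ih =>
    rename_i α _
    let P : Ideal (MvPolynomial α K)[X] :=
      RingHom.ker ((MvPolynomial.constantCoeff (R := K) (σ := α)).comp Polynomial.constantCoeff)
    have hP : P.IsMaximal :=
      RingHom.ker_isMaximal_of_surjective _ fun c => ⟨C (MvPolynomial.C c), by simp⟩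
    have : P.LiesOver (idealOfVars α K) := ⟨by
      ext p
      simp [P, ← ker_constantCoeff_eq_idealOfVars, RingHom.mem_ker]⟩
    have hcomp : ((MvPolynomial.constantCoeff.comp Polynomial.constantCoeff).comp
        (MvPolynomial.optionEquivLeft K α).toRingEquiv.toRingHom) =
        MvPolynomial.constantCoeff := by
      refine MvPolynomial.ringHom_ext (by simp) ?_
      rintro (_ | i) <;> simp
    have hcomap : P.comap (MvPolynomial.optionEquivLeft K α).toRingEquiv
        = idealOfVars (Option α) K := by
      rw [← ker_constantCoeff_eq_idealOfVars, ← hcomp]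
      rfl
    rw [← hcomap, RingEquiv.height_comap, Polynomial.height_eq_height_add_one (idealOfVars α K), ih,
      Finite.card_option, Nat.cast_succ]

lemma mem_minimalPrimes_of_pow_le [IsNoetherianRing R] {M I : Ideal R} [M.IsMaximal] (hI : I ≤ M)
    {N : ℕ} (h : M ^ N ≤ I ⊔ M ^ (N + 1)) : M ∈ I.minimalPrimes := by
  obtain ⟨r, hr, hrN⟩ := Submodule.exists_sub_one_mem_and_smul_le_of_fg_of_le_sup
    (I := M) (N := I) (N' := M ^ N) (P := M ^ N) (IsNoetherian.noetherian _) le_rfl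
    (by rwa [smul_eq_mul, ← pow_succ'])
  refine ⟨⟨inferInstance, hI⟩, fun Q ⟨hQ, hIQ⟩ hQM x hx => ?_⟩
  have hrQ : r ∉ Q := fun hrQ =>
    Ideal.IsPrime.one_notMem inferInstance (by simpa using M.sub_mem (hQM hrQ) hr)
  have hrx : r * x ^ N ∈ Q :=
    hIQ (hrN (Submodule.smul_mem_pointwise_smul _ _ _ (Ideal.pow_mem_pow hx N)))
  exact hQ.mem_of_pow_mem N ((hQ.mem_or_mem hrx).resolve_left hrQ)

lemma mem_minimalPrimes_mono {I J M : Ideal R} (hM : M ∈ I.minimalPrimes) (hIJ : I ≤ J)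
    (hJM : J ≤ M) : M ∈ J.minimalPrimes :=
  ⟨⟨hM.1.1, hJM⟩, fun _ hQ => hM.2 ⟨hQ.1, hIJ.trans hQ.2⟩⟩

lemma comap_evalRingHom_zero_mem_minimalPrimes {J : Ideal R[X]} (hX : X ∈ J) {M : Ideal R}
    (hM : M ∈ (J.comap C).minimalPrimes) :
    M.comap (evalRingHom 0) ∈ J.minimalPrimes := by
  have hJ : (J.comap C).comap (evalRingHom 0) = J := by
    ext p
    obtain ⟨q, hq⟩ : X ∣ p - C (eval 0 p) := by
      rw [X_dvd_iff]
      simp [coeff_zero_eq_eval_zero]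
    have hpJ : p - C (eval 0 p) ∈ J := hq ▸ J.mul_mem_right _ hX
    simpa using J.sub_mem_iff_left (x := p) hpJ
  have hsurj : Function.Surjective (evalRingHom (0 : R)) := fun c => ⟨C c, by simp⟩
  rw [← hJ, Ideal.comap_minimalPrimes_eq_of_surjective hsurj]
  exact ⟨M, hM, rfl⟩

/-- Krull's principal ideal theorem in `R ⧸ P`. -/
lemma eq_of_le_of_lt_of_mem_minimalPrimes_sup_span_singleton [IsNoetherianRing R]
    {P Q N : Ideal R} {x : R} [P.IsPrime] [Q.IsPrime] (hPQ : P ≤ Q) (hQN : Q < N)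
    (hN : N ∈ (P ⊔ Ideal.span {x}).minimalPrimes) : P = Q := by
  by_contra hne
  have := hN.1.1
  have hQ' : (Q.map (Ideal.Quotient.mk P)).IsPrime := Ideal.isPrime_map_quotientMk_of_isPrime hPQ
  have hN' : (N.map (Ideal.Quotient.mk P)).IsPrime :=
    Ideal.isPrime_map_quotientMk_of_isPrime (hPQ.trans hQN.le)
  have hlt₁ : (⊥ : Ideal (R ⧸ P)) < Q.map (Ideal.Quotient.mk P) := by
    rw [bot_lt_iff_ne_bot, Ne, Ideal.map_eq_bot_iff_le_ker, Ideal.mk_ker]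
    exact fun h => hne (hPQ.antisymm h)
  have hlt₂ : Q.map (Ideal.Quotient.mk P) < N.map (Ideal.Quotient.mk P) := by
    refine lt_of_le_not_ge (Ideal.map_mono hQN.le) fun h => hQN.not_ge ?_
    simpa only [Ideal.comap_map_mk hPQ, Ideal.comap_map_mk (hPQ.trans hQN.le)] using
      Ideal.comap_mono (f := Ideal.Quotient.mk P) h
  have hle : (2 : ℕ∞) ≤ 1 :=
    calc (2 : ℕ∞) = 0 + 1 + 1 := by norm_num
      _ ≤ (⊥ : Ideal (R ⧸ P)).height + 1 + 1 := by gcongr; exact bot_le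
      _ ≤ (Q.map (Ideal.Quotient.mk P)).height + 1 := by
        gcongr; exact Ideal.height_add_one_le_of_lt_of_isPrime hlt₁
      _ ≤ (N.map (Ideal.Quotient.mk P)).height := Ideal.height_add_one_le_of_lt_of_isPrime hlt₂
      _ ≤ 1 := Ideal.map_height_le_one_of_mem_minimalPrimes hN
  norm_num at hle

lemma X_notMem_map_C {M : Ideal R} [M.IsPrime] : X ∉ M.map C := fun h =>
  Ideal.IsPrime.one_notMem ‹M.IsPrime› (by
    simpa only [coeff_X_one] using Ideal.mem_map_C_iff.1 h 1)

lemma eq_map_C_of_map_C_le_sup_span_X [IsNoetherianRing R] {I M : Ideal R} {P : Ideal R[X]}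
    [P.IsPrime] (hM : M ∈ I.minimalPrimes) (hPM : P ≤ M.map C)
    (hIP : I.map C ≤ P ⊔ Ideal.span {X}) : P = M.map C := by
  have := hM.1.1
  have hQ : (M.map C).IsPrime := Ideal.isPrime_map_C_of_isPrime
  let N : Ideal R[X] := M.comap (evalRingHom 0)
  have hMN : M.map C ≤ N := Ideal.map_le_iff_le_comap.2 fun x hx => by simpa [N] using hx
  have hXN : X ∈ N := by simp [N]
  have hNmin : N ∈ (P ⊔ Ideal.span {X}).minimalPrimes := by
    refine comap_evalRingHom_zero_mem_minimalPrimes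
      (Ideal.mem_sup_right (Ideal.mem_span_singleton_self X))
      (mem_minimalPrimes_mono hM (Ideal.map_le_iff_le_comap.1 hIP) fun x hx => ?_)
    have hxN : C x ∈ N :=
      sup_le (hPM.trans hMN) ((Ideal.span_singleton_le_iff_mem _).2 hXN) (Ideal.mem_comap.1 hx)
    simpa [N] using hxN
  exact eq_of_le_of_lt_of_mem_minimalPrimes_sup_span_singleton hPM
    (lt_of_le_not_ge hMN fun h => X_notMem_map_C (h hXN)) hNmin

/-- The ideal of `2 × 2` minors of the matrix with rows `a` and `b`. -/
def minorsIdeal (a b : ι → R) : Ideal R :=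
  Ideal.span (Set.range fun p : ι × ι => a p.1 * b p.2 - a p.2 * b p.1)

lemma minor_mem_minorsIdeal (a b : ι → R) (j k : ι) :
    a j * b k - a k * b j ∈ minorsIdeal a b :=
  Ideal.subset_span ⟨(j, k), rfl⟩

lemma minorsIdeal_le_iff {a b : ι → R} {I : Ideal R} :
    minorsIdeal a b ≤ I ↔ ∀ j k, a j * b k - a k * b j ∈ I := by
  rw [minorsIdeal, Ideal.span_le, Set.range_subset_iff, Prod.forall]
  rfl

lemma minorsIdeal_le_of_isPrime {a b : ι → R} {P : Ideal R} (hP : P.IsPrime) {o : ι}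
    (ho : a o ∉ P) (h : ∀ k, a o * b k - a k * b o ∈ P) : minorsIdeal a b ≤ P := by
  refine minorsIdeal_le_iff.2 fun j k => (hP.mem_or_mem ?_).resolve_left ho
  have hmul : a o * (a j * b k - a k * b j)
      = a j * (a o * b k - a k * b o) - a k * (a o * b j - a j * b o) := by ring
  exact hmul ▸ P.sub_mem (P.mul_mem_left _ (h k)) (P.mul_mem_left _ (h j))

lemma minorsIdeal_le_sup {a a' b b' : ι → R} {I : Ideal R} (ha : ∀ j, a j - a' j ∈ I)
    (hb : ∀ j, b j - b' j ∈ I) : minorsIdeal a b ≤ minorsIdeal a' b' ⊔ I := by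
  refine minorsIdeal_le_iff.2 fun j k => ?_
  have hsplit : a j * b k - a k * b j = (a' j * b' k - a' k * b' j)
      + ((a j - a' j) * b k + a' j * (b k - b' k)
        - ((a k - a' k) * b j + a' k * (b j - b' j))) := by ring
  have hmem : ∀ j k, (a j - a' j) * b k + a' j * (b k - b' k) ∈ I := fun j k =>
    I.add_mem (I.mul_mem_right _ (ha j)) (I.mul_mem_left _ (hb k))
  exact hsplit ▸ Submodule.add_mem_sup (minor_mem_minorsIdeal _ _ j k)
    (I.sub_mem (hmem j k) (hmem k j))

lemma map_minorsIdeal {S : Type*} [CommRing S] (φ : R →+* S) (a b : ι → R) :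
    (minorsIdeal a b).map φ = minorsIdeal (φ ∘ a) (φ ∘ b) := by
  simp only [minorsIdeal, Ideal.map_span, ← Set.range_comp]
  congr 2
  ext p
  simp

/-- Deforming one entry of the first row to a nonzerodivisor cuts the number of minors needed to
generate a two-row determinantal ideal, up to radical and along `M.map C`, to `card ι - 1`. -/
lemma map_C_mem_minimalPrimes_of_minorsIdeal [IsNoetherianRing R] {a b : ι → R}
    {I M : Ideal R} (hIM : I ≤ M) (ha : ∀ j, a j ∈ M) (hb : ∀ j, b j ∈ M)
    (hM : M ∈ (minorsIdeal a b ⊔ I).minimalPrimes) (o : ι) :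
    M.map C ∈ (Ideal.span ((fun k => (C (a o) + X) * C (b k) - C (a k * b o)) '' {o}ᶜ)
      ⊔ I.map C).minimalPrimes := by
  classical
  have := hM.1.1
  have hX : X ∉ M.map C := X_notMem_map_C
  have hCM {x : R} (hx : x ∈ M) : C x ∈ M.map C := Ideal.mem_map_of_mem _ hx
  refine ⟨⟨Ideal.isPrime_map_C_of_isPrime, sup_le ?_ (Ideal.map_mono hIM)⟩,
    fun P ⟨hP, hle⟩ hPM => ?_⟩
  · rw [Ideal.span_le]
    rintro _ ⟨k, -, rfl⟩
    exact Ideal.sub_mem _ (Ideal.mul_mem_left _ _ (hCM (hb k)))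
      (hCM (M.mul_mem_left _ (hb o)))
  let a' : ι → R[X] := Function.update (C ∘ a) o (C (a o) + X)
  have ha'o : a' o ∉ P := fun h => hX (by
    simpa [a', (M.map C).add_mem_iff_right (hCM (ha o))] using hPM h)
  have hminors : minorsIdeal a' (C ∘ b) ≤ P := minorsIdeal_le_of_isPrime hP ha'o fun k => by
    rcases eq_or_ne k o with rfl | hk
    · simp
    · refine hle (Ideal.mem_sup_left (Ideal.subset_span ⟨k, hk, ?_⟩))
      simp [a', hk]
  have hMle : (minorsIdeal a b ⊔ I).map C ≤ P ⊔ Ideal.span {X} := by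
    rw [Ideal.map_sup, map_minorsIdeal]
    refine sup_le ((minorsIdeal_le_sup (fun j => ?_) (fun j => ?_)).trans
      (sup_le_sup_right hminors _)) ((le_sup_right.trans hle).trans le_sup_left)
    · rcases eq_or_ne j o with rfl | hj
      · simp [a']
      · simp [a', hj]
    · simp
  exact (eq_map_C_of_map_C_le_sup_span_X hM hPM hMle).ge

lemma height_add_one_le_of_mem_minimalPrimes_minorsIdeal [IsNoetherianRing R] [Fintype ι]
    [Nonempty ι] {a b : ι → R} {c : Finset R} {M : Ideal R} [M.IsMaximal]
    (ha : ∀ j, a j ∈ M) (hb : ∀ j, b j ∈ M)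
    (hM : M ∈ (minorsIdeal a b ⊔ Ideal.span c).minimalPrimes) :
    M.height + 1 ≤ Fintype.card ι + c.card := by
  classical
  obtain ⟨o⟩ := ‹Nonempty ι›
  let m (k : ι) : R[X] := (C (a o) + X) * C (b k) - C (a k * b o)
  have hmin := map_C_mem_minimalPrimes_of_minorsIdeal (le_sup_right.trans hM.1.2) ha hb hM o
  have hspan : Ideal.span (m '' {o}ᶜ) ⊔ (Ideal.span (c : Set R)).map C
      = Ideal.span ((Finset.univ.erase o).image m ∪ c.image C : Finset R[X]) := by
    rw [Ideal.map_span, ← Ideal.span_union]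
    congr 2
    simp [Set.compl_eq_univ_sdiff]
  rw [hspan] at hmin
  have hheight := Ideal.height_le_card_of_mem_minimalPrimes_span_finset hmin
  rw [Polynomial.height_map_C] at hheight
  have hcard : ((Finset.univ.erase o).image m ∪ c.image C).card + 1 ≤ Fintype.card ι + c.card := by
    have hunion := Finset.card_union_le ((Finset.univ.erase o).image m) (c.image C)
    have hle₁ : ((Finset.univ.erase o).image m).card ≤ _ := Finset.card_image_le
    have hle₂ : (c.image C).card ≤ _ := Finset.card_image_le
    have herase := Finset.card_erase_add_one (Finset.mem_univ o)
    rw [Finset.card_univ] at herase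
    lia
  exact (add_le_add_left hheight 1).trans (by exact_mod_cast hcard)

end Height

section WeightedCounting

open MvPolynomial (idealOfVars pderiv IsWeightedHomogeneous)

variable {K : Type*} [Field K] {σ ι : Type*}

lemma span_X_image_le_idealOfVars (s : Set σ) :
    Ideal.span (MvPolynomial.X '' s) ≤ idealOfVars σ K :=
  Ideal.span_mono (Set.image_subset_range _ _)

section Cardinality

variable {I : Ideal (MvPolynomial σ K)} {S : Finset σ} {T : Finset ι}

lemma span_X_image_compl [Fintype σ] [DecidableEq σ] [DecidableEq (MvPolynomial σ K)] :
    Ideal.span (MvPolynomial.X '' (S : Set σ)ᶜ : Set (MvPolynomial σ K)) =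
      Ideal.span (Sᶜ.image MvPolynomial.X : Finset (MvPolynomial σ K)) := by
  rw [Finset.coe_image, Finset.coe_compl]

lemma card_le_of_mem_minimalPrimes [Finite σ] {g : ι → MvPolynomial σ K}
    (hg : ∀ j, g j ∈ idealOfVars σ K)
    (hT : ∀ j ∉ T, g j ∈ Ideal.span (MvPolynomial.X '' (S : Set σ)ᶜ))
    (hI : I ≤ Ideal.span (Set.range g) ⊔ Ideal.span (MvPolynomial.X '' (S : Set σ)ᶜ))
    (hmin : idealOfVars σ K ∈ I.minimalPrimes) : S.card ≤ T.card := by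
  classical
  have := Fintype.ofFinite σ
  let E : Finset (MvPolynomial σ K) := T.image g ∪ Sᶜ.image MvPolynomial.X
  have hE : Ideal.span (E : Set (MvPolynomial σ K)) = Ideal.span (g '' T)
      ⊔ Ideal.span (MvPolynomial.X '' (S : Set σ)ᶜ) := by
    rw [span_X_image_compl, ← Ideal.span_union, Finset.coe_union, Finset.coe_image]
  have hIE : I ≤ Ideal.span E := by
    refine hI.trans (sup_le (Ideal.span_le.2 ?_) (hE ▸ le_sup_right))
    rintro _ ⟨j, rfl⟩
    by_cases hj : j ∈ T
    · exact hE ▸ Ideal.mem_sup_left (Ideal.subset_span ⟨j, hj, rfl⟩)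
    · exact hE ▸ Ideal.mem_sup_right (hT j hj)
  have hEM : Ideal.span E ≤ idealOfVars σ K :=
    hE ▸ sup_le (Ideal.span_le.2 (Set.image_subset_iff.2 fun j _ => hg j))
      (span_X_image_le_idealOfVars _)
  have hheight := Ideal.height_le_card_of_mem_minimalPrimes_span_finset
    (mem_minimalPrimes_mono hmin hIE hEM)
  rw [height_idealOfVars, Nat.card_eq_fintype_card, Nat.cast_le] at hheight
  have hcard : E.card ≤ T.card + Sᶜ.card :=
    (Finset.card_union_le _ _).trans (add_le_add Finset.card_image_le Finset.card_image_le)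
  have := S.card_compl_add_card
  lia

lemma minorsIdeal_le_subtype_sup {R : Type*} [CommRing R] {a b : ι → R} {J : Ideal R}
    (ha : ∀ j ∉ T, a j ∈ J) (hb : ∀ j ∉ T, b j ∈ J) :
    minorsIdeal a b ≤ minorsIdeal (fun j : T => a j) (fun j : T => b j) ⊔ J := by
  refine minorsIdeal_le_iff.2 fun j k => ?_
  by_cases hj : j ∈ T
  · by_cases hk : k ∈ T
    · exact Ideal.mem_sup_left
        (minor_mem_minorsIdeal (fun j : T => a j) (fun j : T => b j) ⟨j, hj⟩ ⟨k, hk⟩)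
    · exact Ideal.mem_sup_right (J.sub_mem (J.mul_mem_left _ (hb k hk))
        (J.mul_mem_right _ (ha k hk)))
  · exact Ideal.mem_sup_right (J.sub_mem (J.mul_mem_right _ (ha j hj))
      (J.mul_mem_left _ (hb j hj)))

lemma card_lt_of_mem_minimalPrimes_minorsIdeal [Finite σ] (hTne : T.Nonempty)
    {a b : ι → MvPolynomial σ K}
    (ha : ∀ j, a j ∈ idealOfVars σ K) (hb : ∀ j, b j ∈ idealOfVars σ K)
    (haT : ∀ j ∉ T, a j ∈ Ideal.span (MvPolynomial.X '' (S : Set σ)ᶜ))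
    (hbT : ∀ j ∉ T, b j ∈ Ideal.span (MvPolynomial.X '' (S : Set σ)ᶜ))
    (hI : I ≤ minorsIdeal a b ⊔ Ideal.span (MvPolynomial.X '' (S : Set σ)ᶜ))
    (hmin : idealOfVars σ K ∈ I.minimalPrimes) : S.card < T.card := by
  classical
  have := Fintype.ofFinite σ
  have hM : idealOfVars σ K ∈ (minorsIdeal (fun j : T => a j) (fun j : T => b j) ⊔
      Ideal.span (Sᶜ.image MvPolynomial.X : Finset (MvPolynomial σ K))).minimalPrimes := by
    rw [← span_X_image_compl]
    refine mem_minimalPrimes_mono hmin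
      (hI.trans (sup_le (minorsIdeal_le_subtype_sup haT hbT) le_sup_right))
      (sup_le (minorsIdeal_le_iff.2 fun j k => ?_) (span_X_image_le_idealOfVars _))
    exact Ideal.sub_mem _ (Ideal.mul_mem_left _ _ (hb k)) (Ideal.mul_mem_left _ _ (hb j))
  have : Nonempty T := hTne.to_subtype
  have hheight := height_add_one_le_of_mem_minimalPrimes_minorsIdeal
    (fun j : T => ha j) (fun j : T => hb j) hM
  rw [height_idealOfVars, Nat.card_eq_fintype_card, Fintype.card_coe] at hheight
  have hcard : Fintype.card σ + 1 ≤ T.card + (Sᶜ.image (MvPolynomial.X (R := K))).card := by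
    exact_mod_cast hheight
  have himage : (Sᶜ.image (MvPolynomial.X (R := K))).card ≤ Sᶜ.card := Finset.card_image_le
  have := S.card_compl_add_card
  lia

end Cardinality

section MonomialSupport

lemma derivation_mem_pow {R A : Type*} [CommSemiring R] [CommSemiring A] [Algebra R A]
    {I : Ideal A} {a : A} {k : ℕ} (D : Derivation R A A)
    (ha : a ∈ I ^ (k + 1)) : D a ∈ I ^ k := by
  induction k generalizing a with
  | zero => simp
  | succ k ih =>
    rw [pow_succ] at ha
    induction ha using Submodule.mul_induction_on' with
    | mem_mul_mem x hx y hy =>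
      rw [D.leibniz, smul_eq_mul, smul_eq_mul, pow_succ', mul_comm (x : A)]
      exact add_mem (Ideal.mul_mem_left _ _ (pow_succ' I k ▸ hx)) (Ideal.mul_mem_mul hy (ih hx))
    | add x _ y _ hx hy => exact D.map_add x y ▸ add_mem hx hy

variable {R : Type*} [CommSemiring R]
  {Γ : Type*} [AddCommGroup Γ] [LinearOrder Γ] [IsOrderedAddMonoid Γ]
  {v : σ → Γ} {P : MvPolynomial σ R} {c e : Γ} {k : ℕ} {S : Set σ}

lemma pderiv_mem_idealOfVars (hP : P ∈ idealOfVars σ R ^ 2) (j : σ) :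
    pderiv j P ∈ idealOfVars σ R :=
  pow_one (idealOfVars σ R) ▸ derivation_mem_pow (pderiv j) hP

lemma mem_span_X_image_compl_of_nonpos (hP : IsWeightedHomogeneous v P c)
    (hS : ∀ i ∈ S, v i ≤ 0) (hc : 0 < c) : P ∈ Ideal.span (MvPolynomial.X '' Sᶜ) := by
  refine MvPolynomial.mem_ideal_span_X_image.2 fun m hm => ?_
  by_contra! hmS
  have hweight : Finsupp.weight v m ≤ 0 := by
    rw [Finsupp.weight_apply]
    refine Finset.sum_nonpos fun i hi => nsmul_nonpos (hS i ?_) _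
    by_contra hiS
    exact Finsupp.mem_support_iff.1 hi (hmS i hiS)
  exact (hP (MvPolynomial.mem_support_iff.1 hm) ▸ hweight).not_gt hc

lemma mem_span_X_image_compl_of_le (hP : IsWeightedHomogeneous v P c)
    (hPk : P ∈ idealOfVars σ R ^ k) (he : 0 ≤ e) (hS : ∀ i ∈ S, e ≤ v i) (hc : c < k • e) :
    P ∈ Ideal.span (MvPolynomial.X '' Sᶜ) := by
  refine MvPolynomial.mem_ideal_span_X_image.2 fun m hm => ?_
  by_contra! hmS
  have hweight : k • e ≤ Finsupp.weight v m :=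
    calc k • e ≤ m.degree • e :=
          nsmul_le_nsmul_left he ((MvPolynomial.mem_pow_idealOfVars_iff _ _).1 hPk m hm)
      _ = ∑ i ∈ m.support, m i • e := by rw [Finsupp.degree_apply, Finset.sum_smul]
      _ ≤ ∑ i ∈ m.support, m i • v i := by
        refine Finset.sum_le_sum fun i hi => nsmul_le_nsmul_right (hS i ?_) _
        by_contra hiS
        exact Finsupp.mem_support_iff.1 hi (hmS i hiS)
      _ = Finsupp.weight v m := (Finsupp.weight_apply _ _).symm
  exact (hP (MvPolynomial.mem_support_iff.1 hm) ▸ hweight).not_gt hc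

lemma pderiv_mem_span_of_nonpos (hP : IsWeightedHomogeneous v P c)
    (hS : ∀ i ∈ S, v i ≤ 0) {j : σ} (hj : v j < c) :
    pderiv j P ∈ Ideal.span (MvPolynomial.X '' Sᶜ) :=
  mem_span_X_image_compl_of_nonpos (hP.pderiv (sub_add_cancel c (v j))) hS (sub_pos.2 hj)

lemma pderiv_mem_span_of_le (hP : IsWeightedHomogeneous v P c) (hP2 : P ∈ idealOfVars σ R ^ 2)
    (he : 0 ≤ e) (hce : c ≤ e) (hS : ∀ i ∈ S, e ≤ v i) {j : σ} (hj : 0 < v j) :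
    pderiv j P ∈ Ideal.span (MvPolynomial.X '' Sᶜ) :=
  mem_span_X_image_compl_of_le (k := 1) (hP.pderiv (sub_add_cancel c (v j)))
    (derivation_mem_pow (pderiv j) hP2) he hS (by
      rw [one_nsmul]
      exact (sub_lt_self c hj).trans_le hce)

end MonomialSupport

section Weights

variable {Γ : Type*} [AddCommGroup Γ] [LinearOrder Γ] [IsOrderedAddMonoid Γ]
  {v : σ → Γ} {F G : MvPolynomial σ K} {c d : Γ}

lemma card_nonpos_eq_card_ge [Fintype σ] (hF : IsWeightedHomogeneous v F c) (hc : 0 < c)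
    (hF2 : F ∈ idealOfVars σ K ^ 2)
    (hmin : idealOfVars σ K ∈
      (Ideal.span (Set.range fun j => pderiv j F) ⊔ Ideal.span {F}).minimalPrimes) :
    Finset.card {i | v i ≤ 0} = Finset.card {i | c ≤ v i} := by
  have hle {S : Finset σ} (hFS : F ∈ Ideal.span (MvPolynomial.X '' (S : Set σ)ᶜ)) :
      Ideal.span (Set.range fun j => pderiv j F) ⊔ Ideal.span {F} ≤
        Ideal.span (Set.range fun j => pderiv j F) ⊔
          Ideal.span (MvPolynomial.X '' (S : Set σ)ᶜ) :=
    sup_le_sup_left ((Ideal.span_singleton_le_iff_mem _).2 hFS) _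
  apply le_antisymm
  · exact card_le_of_mem_minimalPrimes (pderiv_mem_idealOfVars hF2)
      (fun j hj => pderiv_mem_span_of_nonpos hF (by simp) (by simpa using hj))
      (hle (mem_span_X_image_compl_of_nonpos hF (by simp) hc)) hmin
  · exact card_le_of_mem_minimalPrimes (pderiv_mem_idealOfVars hF2)
      (fun j hj => pderiv_mem_span_of_le hF hF2 hc.le le_rfl (by simp) (by simpa using hj))
      (hle (mem_span_X_image_compl_of_le hF hF2 hc.le (by simp)
        (by rw [two_nsmul]; exact lt_add_of_pos_left c hc))) hmin

theorem weight_pos_of_isWeightedHomogeneous [Finite σ] (hF : IsWeightedHomogeneous v F c)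
    (hc : 0 < c) (hG : IsWeightedHomogeneous v G d)
    (hF2 : F ∈ idealOfVars σ K ^ 2) (hG2 : G ∈ idealOfVars σ K ^ 2)
    (hFmin : idealOfVars σ K ∈ (Ideal.span (Set.range fun j => pderiv j F)).minimalPrimes)
    (hGmin : idealOfVars σ K ∈
      (Ideal.span (Set.range fun j => pderiv j G) ⊔ Ideal.span {G}).minimalPrimes)
    (hFGmin : idealOfVars σ K ∈
      (minorsIdeal (fun j => pderiv j F) (fun j => pderiv j G) ⊔ Ideal.span {G}).minimalPrimes)
    (i : σ) : 0 < v i := by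
  have := Fintype.ofFinite σ
  by_contra! hi
  set L : Finset σ := {i | v i ≤ 0} with hL
  have hLne : L.Nonempty := ⟨i, by simpa [hL] using hi⟩
  have hcardF : L.card = Finset.card {i | c ≤ v i} := card_nonpos_eq_card_ge hF hc hF2
    (mem_minimalPrimes_mono hFmin le_sup_left (sup_le hFmin.1.2
      ((Ideal.span_singleton_le_iff_mem _).2 (Ideal.pow_le_self two_ne_zero hF2))))
  have hpF := pderiv_mem_idealOfVars hF2
  have hpG := pderiv_mem_idealOfVars hG2
  have hle {S : Finset σ} (hGS : G ∈ Ideal.span (MvPolynomial.X '' (S : Set σ)ᶜ)) :=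
    sup_le_sup_left ((Ideal.span_singleton_le_iff_mem _).2 hGS)
      (minorsIdeal (fun j => pderiv j F) (fun j => pderiv j G))
  rcases le_or_gt d 0 with hd | hd
  · refine (card_lt_of_mem_minimalPrimes_minorsIdeal hLne hpF hpG
      (fun j hj => pderiv_mem_span_of_le hF hF2 hc.le le_rfl (by simp) (by simpa [hL] using hj))
      (fun j hj => pderiv_mem_span_of_le hG hG2 hc.le (hd.trans hc.le) (by simp)
        (by simpa [hL] using hj))
      (hle (mem_span_X_image_compl_of_le hG hG2 hc.le (by simp) ?_)) hFGmin).ne' hcardF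
    rw [two_nsmul]
    exact hd.trans_lt (add_pos hc hc)
  · obtain ⟨e, hec, hed, hcard⟩ : ∃ e ≤ c, e ≤ d ∧ L.card = Finset.card {i | e ≤ v i} := by
      rcases le_total d c with hdc | hcd
      · exact ⟨d, hdc, le_rfl, card_nonpos_eq_card_ge hG hd hG2 hGmin⟩
      · exact ⟨c, le_rfl, hcd, hcardF⟩
    refine (card_lt_of_mem_minimalPrimes_minorsIdeal
      (Finset.card_pos.1 (hcard ▸ hLne.card_pos)) hpF hpG
      (fun j hj => pderiv_mem_span_of_nonpos hF (by simp [hL]) ?_)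
      (fun j hj => pderiv_mem_span_of_nonpos hG (by simp [hL]) ?_)
      (hle (mem_span_X_image_compl_of_nonpos hG (by simp [hL]) hd)) hFGmin).ne hcard
    all_goals
      have hje : v j < e := by simpa using hj
      order

end Weights

end WeightedCounting

section GeneralizedEigenspaces

open Module (End)

variable {K V W : Type*} [Field K] [AddCommGroup V] [Module K V] [AddCommGroup W] [Module K W]

lemma eq_of_le_of_iSupIndep_of_iSup_eq_top {ι α : Type*} [CompleteLattice α]
    [IsModularLattice α] {p q : ι → α} (hpq : ∀ i, p i ≤ q i) (hp : ⨆ i, p i = ⊤)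
    (hq : iSupIndep q) : p = q := by
  funext i
  have hdisj : q i ⊓ ⨆ (j) (_ : j ≠ i), p j = ⊥ :=
    ((hq i).mono_right (iSup₂_mono fun j _ => hpq j)).eq_bot
  have hsup : p i ⊔ ⨆ (j) (_ : j ≠ i), p j = ⊤ := by rw [← hp, iSup_split_single p i]
  calc p i = p i ⊔ (⨆ (j) (_ : j ≠ i), p j) ⊓ q i := by rw [inf_comm, hdisj, sup_bot_eq]
    _ = q i := by rw [← sup_inf_assoc_of_le _ (hpq i), hsup, top_inf_eq]

lemma map_mem_maxGenEigenspace {π : V →ₗ[K] W} {S : End K V} {T : End K W}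
    (h : π ∘ₗ S = T ∘ₗ π) {μ : K} {x : V} (hx : x ∈ S.maxGenEigenspace μ) :
    π x ∈ T.maxGenEigenspace μ := by
  rw [End.mem_maxGenEigenspace] at hx ⊢
  obtain ⟨k, hk⟩ := hx
  have hcomm : (T - μ • 1) ∘ₗ π = π ∘ₗ (S - μ • 1) := by
    rw [LinearMap.comp_sub, LinearMap.sub_comp, h]
    ext
    simp
  refine ⟨k, ?_⟩
  rw [← LinearMap.comp_apply, Module.End.commute_pow_left_of_commute hcomm, LinearMap.comp_apply,
    hk, map_zero]

lemma map_maxGenEigenspace [IsAlgClosed K] [FiniteDimensional K V] {π : V →ₗ[K] W}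
    (hπ : Function.Surjective π) {S : End K V} {T : End K W} (h : π ∘ₗ S = T ∘ₗ π) (μ : K) :
    (S.maxGenEigenspace μ).map π = T.maxGenEigenspace μ := by
  refine congr_fun (f := fun ν => (S.maxGenEigenspace ν).map π)
    (eq_of_le_of_iSupIndep_of_iSup_eq_top (fun ν => ?_) ?_ T.independent_maxGenEigenspace) μ
  · rintro _ ⟨x, hx, rfl⟩
    exact map_mem_maxGenEigenspace h hx
  · rw [← Submodule.map_iSup, End.iSup_maxGenEigenspace_eq_top, Submodule.map_top,
      LinearMap.range_eq_top.2 hπ]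

lemma exists_basis_mem_maxGenEigenspace [IsAlgClosed K] [FiniteDimensional K V] (T : End K V)
    {ι : Type*} [Finite ι] (hι : Nat.card ι = Module.finrank K V) :
    ∃ (b : Module.Basis ι K V) (w : ι → K), ∀ i, b i ∈ T.maxGenEigenspace (w i) := by
  have hspan : ⊤ ≤ Submodule.span K (⋃ μ, (T.maxGenEigenspace μ : Set V)) := by
    rw [Submodule.span_iUnion]
    simp [End.iSup_maxGenEigenspace_eq_top]
  have := Module.Finite.finite_basis (Module.Basis.ofSpan hspan)
  rw [Module.finrank_eq_nat_card_basis (Module.Basis.ofSpan hspan)] at hι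
  obtain ⟨e⟩ := Finite.card_eq.1 hι
  have hmem (i : ι) : ∃ μ, (Module.Basis.ofSpan hspan).reindex e.symm i ∈
      T.maxGenEigenspace μ := by
    simpa using Module.Basis.ofSpan_subset hspan (Set.mem_range_self (e i))
  choose w hw using hmem
  exact ⟨_, w, hw⟩

lemma exists_eq_of_hasEigenvalue {ι : Type*} {T : End K V} {b : ι → V} {w : ι → K}
    (hb : Submodule.span K (Set.range b) = ⊤) (hbw : ∀ i, b i ∈ T.maxGenEigenspace (w i))
    {μ : K} (hμ : T.HasEigenvalue μ) : ∃ i, w i = μ := by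
  by_contra! hne
  have htop : ⨆ (ν) (_ : ν ≠ μ), T.maxGenEigenspace ν = ⊤ := by
    rw [eq_top_iff, ← hb, Submodule.span_le, Set.range_subset_iff]
    exact fun i => Submodule.mem_iSup_of_mem (w i) (Submodule.mem_iSup_of_mem (hne i) (hbw i))
  have hbot := T.independent_maxGenEigenspace μ
  rw [htop, disjoint_top] at hbot
  exact hμ (eq_bot_iff.2 (hbot ▸ End.eigenspace_le_maxGenEigenspace))

end GeneralizedEigenspaces

section Derivation

open Module.End (maxGenEigenspace)
open MvPolynomial (IsWeightedHomogeneous weightedHomogeneousComponent)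

variable {K A σ : Type*} [Field K] [CommRing A] [Algebra K A] {D : Derivation K A A}
  {μ ν : K} {x y : A}

lemma mem_maxGenEigenspace_of_sub_mem {V : Type*} [AddCommGroup V] [Module K V]
    {T : Module.End K V} {v : V} (h : T v - μ • v ∈ maxGenEigenspace T μ) :
    v ∈ maxGenEigenspace T μ := by
  rw [Module.End.mem_maxGenEigenspace] at h ⊢
  obtain ⟨k, hk⟩ := h
  exact ⟨k + 1, by simpa [pow_succ] using hk⟩

lemma mul_mem_maxGenEigenspace (hx : x ∈ maxGenEigenspace D.toLinearMap μ)
    (hy : y ∈ maxGenEigenspace D.toLinearMap ν) :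
    x * y ∈ maxGenEigenspace D.toLinearMap (μ + ν) := by
  obtain ⟨k, hk⟩ := (Module.End.mem_maxGenEigenspace _ _ _).1 hx
  obtain ⟨l, hl⟩ := (Module.End.mem_maxGenEigenspace _ _ _).1 hy
  clear hx hy
  induction k generalizing x l y with
  | zero => simp [show x = 0 by simpa using hk]
  | succ k ihk =>
    induction l generalizing y with
    | zero => simp [show y = 0 by simpa using hl]
    | succ l ihl =>
      rw [pow_succ, Module.End.mul_apply] at hk hl
      have hleibniz : D.toLinearMap (x * y) - (μ + ν) • (x * y) =
          (D.toLinearMap - μ • 1) x * y + x * (D.toLinearMap - ν • 1) y := by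
        simp only [Derivation.coeFn_coe, Derivation.leibniz, smul_eq_mul, Algebra.smul_def, map_add,
          mul_one, LinearMap.sub_apply, Module.algebraMap_end_apply]
        ring
      exact mem_maxGenEigenspace_of_sub_mem
        (hleibniz ▸ add_mem (ihk hk (l + 1) (by simpa [pow_succ] using hl)) (ihl hl))

lemma one_mem_maxGenEigenspace : (1 : A) ∈ maxGenEigenspace D.toLinearMap 0 :=
  mem_maxGenEigenspace_of_sub_mem (by simp)

variable {Y : σ → A} {w : σ → K} {P : MvPolynomial σ K}

lemma prod_pow_mem_maxGenEigenspace (hY : ∀ i, Y i ∈ maxGenEigenspace D.toLinearMap (w i))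
    (m : σ →₀ ℕ) :
    (m.prod fun i k => Y i ^ k) ∈ maxGenEigenspace D.toLinearMap (Finsupp.weight w m) := by
  induction m using Finsupp.induction_linear with
  | zero => simpa using one_mem_maxGenEigenspace (D := D)
  | add m m' hm hm' =>
    classical
    rw [Finsupp.prod_add_index' (by simp) (by simp [pow_add]), map_add]
    exact mul_mem_maxGenEigenspace hm hm'
  | single i k =>
    rw [Finsupp.prod_single_index (h := fun i k => Y i ^ k) (pow_zero _), Finsupp.weight_single]
    induction k with
    | zero => simpa using one_mem_maxGenEigenspace (D := D)
    | succ k ih => simpa [pow_succ, add_mul] using mul_mem_maxGenEigenspace ih (hY i)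

lemma aeval_mem_of_maxGenEigenspace_le (hY : ∀ i, Y i ∈ maxGenEigenspace D.toLinearMap (w i))
    {N : Submodule K A}
    (hN : ∀ m ∈ P.support, maxGenEigenspace D.toLinearMap (Finsupp.weight w m) ≤ N) :
    MvPolynomial.aeval Y P ∈ N := by
  rw [MvPolynomial.aeval_def, MvPolynomial.eval₂_eq]
  refine Submodule.sum_mem _ fun m hm => ?_
  rw [← Algebra.smul_def]
  exact Submodule.smul_mem _ _ (hN m hm (prod_pow_mem_maxGenEigenspace hY m))

lemma aeval_weightedHomogeneousComponent (hY : ∀ i, Y i ∈ maxGenEigenspace D.toLinearMap (w i))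
    (hP : MvPolynomial.aeval Y P ∈ maxGenEigenspace D.toLinearMap μ) :
    MvPolynomial.aeval Y (weightedHomogeneousComponent w μ P) = MvPolynomial.aeval Y P := by
  classical
  have hcomp : MvPolynomial.aeval Y (weightedHomogeneousComponent w μ P) ∈
      maxGenEigenspace D.toLinearMap μ := aeval_mem_of_maxGenEigenspace_le hY fun m hm => by
    rw [MvPolynomial.support_weightedHomogeneousComponent, Finset.mem_filter] at hm
    rw [hm.2]
  have hrest : MvPolynomial.aeval Y (P - weightedHomogeneousComponent w μ P) ∈
      ⨆ (ν) (_ : ν ≠ μ), maxGenEigenspace D.toLinearMap ν :=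
    aeval_mem_of_maxGenEigenspace_le hY fun m hm => by
      refine le_iSup₂_of_le (Finsupp.weight w m) (fun h => ?_) le_rfl
      simp [MvPolynomial.coeff_weightedHomogeneousComponent, h] at hm
  refine (sub_eq_zero.1 ?_).symm
  rw [map_sub] at hrest
  exact Submodule.disjoint_def.1 ((Module.End.independent_maxGenEigenspace D.toLinearMap) μ) _
    (sub_mem hP hcomp) hrest

lemma sub_aeval_weightedHomogeneousComponent_mem {K A σ : Type*} [Field K] [CommRing A]
    [Algebra K A] {I : Ideal A} {D : Derivation K (A ⧸ I) (A ⧸ I)} {y : σ → A} {w : σ → K}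
    {a : A} {P : MvPolynomial σ K} {μ : K}
    (hy : ∀ i, Ideal.Quotient.mk I (y i) ∈ maxGenEigenspace D.toLinearMap (w i))
    (ha : Ideal.Quotient.mk I a ∈ maxGenEigenspace D.toLinearMap μ)
    (haP : a - MvPolynomial.aeval y P ∈ I) :
    a - MvPolynomial.aeval y (MvPolynomial.weightedHomogeneousComponent w μ P) ∈ I := by
  have hmk (Q : MvPolynomial σ K) : Ideal.Quotient.mk I (MvPolynomial.aeval y Q) =
      MvPolynomial.aeval (fun i => Ideal.Quotient.mk I (y i)) Q :=
    MvPolynomial.comp_aeval_apply y (Ideal.Quotient.mkₐ K I) Q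
  rw [← Ideal.Quotient.eq, hmk] at haP ⊢
  rw [haP] at ha ⊢
  exact (aeval_weightedHomogeneousComponent hy ha).symm

lemma exists_mul_mem_maxGenEigenspace [IsAlgClosed K] [FiniteDimensional K A] {ε : A →ₐ[K] K}
    (hε : ∀ x, ε (D x) = 0) {α : A} (hx : D x = α * x) :
    ∃ u, ε u = 1 ∧ u * x ∈ maxGenEigenspace D.toLinearMap (ε α) := by
  let S : Module.End K A := D.toLinearMap + LinearMap.mulLeft K α
  have hεS : ε.toLinearMap ∘ₗ S = (ε α • 1 : Module.End K K) ∘ₗ ε.toLinearMap := by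
    ext
    simp [S, hε]
  have hxS : LinearMap.mulRight K x ∘ₗ S = D.toLinearMap ∘ₗ LinearMap.mulRight K x := by
    ext
    simp only [LinearMap.coe_comp, Function.comp_apply, LinearMap.add_apply, Derivation.coeFn_coe,
      LinearMap.mulLeft_apply, LinearMap.mulRight_apply, Derivation.leibniz, hx, smul_eq_mul, S]
    ring
  have hone : (1 : K) ∈ maxGenEigenspace (ε α • 1 : Module.End K K) (ε α) :=
    mem_maxGenEigenspace_of_sub_mem (by simp)
  have hsurj : Function.Surjective ε.toLinearMap := fun c => ⟨algebraMap K A c, by simp⟩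
  rw [← map_maxGenEigenspace hsurj hεS] at hone
  obtain ⟨u, hu, hεu⟩ := hone
  exact ⟨u, hεu, map_mem_maxGenEigenspace hxS hu⟩

end Derivation

section GermRing

lemma analyticAt_clm_apply_const {𝕜 E F G : Type*} [NontriviallyNormedField 𝕜]
    [NormedAddCommGroup E] [NormedSpace 𝕜 E] [NormedAddCommGroup F] [NormedSpace 𝕜 F]
    [NormedAddCommGroup G] [NormedSpace 𝕜 G] {L : E → F →L[𝕜] G} {x : E}
    (hL : AnalyticAt 𝕜 L x) (v : F) : AnalyticAt 𝕜 (fun y => L y v) x :=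
  ((ContinuousLinearMap.apply 𝕜 G v).analyticAt _).comp hL

variable {f g : (Fin n → ℂ) → ℂ} {k : ℕ}

lemma mkOn_eq_iff (hf : AnalyticAt ℂ f 0) (hg : AnalyticAt ℂ g 0) :
    mkOn f hf = mkOn g hg ↔ f =ᶠ[𝓝 0] g :=
  Subtype.ext_iff.trans Filter.Germ.coe_eq

lemma mkOn_rep (a : On n) : mkOn (On.rep a) (On.rep_analyticAt a) = a :=
  Subtype.ext (On.rep_spec a)

lemma exists_mkOn (a : On n) : ∃ f, ∃ hf : AnalyticAt ℂ f 0, mkOn f hf = a :=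
  ⟨_, _, mkOn_rep a⟩

lemma rep_mkOn (hf : AnalyticAt ℂ f 0) : On.rep (mkOn f hf) =ᶠ[𝓝 0] f :=
  (mkOn_eq_iff (On.rep_analyticAt _) hf).1 (mkOn_rep _)

lemma ev0_mkOn (hf : AnalyticAt ℂ f 0) : ev0 (mkOn f hf) = f 0 :=
  (rep_mkOn hf).eq_of_nhds

lemma analyticAt_fderiv_single (hf : AnalyticAt ℂ f 0) (i : Fin n) :
    AnalyticAt ℂ (fun x => fderiv ℂ f x (Pi.single i 1)) 0 :=
  analyticAt_clm_apply_const hf.fderiv _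

lemma pd_mkOn (i : Fin n) (hf : AnalyticAt ℂ f 0) :
    pd i (mkOn f hf) =
      mkOn (fun x => fderiv ℂ f x (Pi.single i 1)) (analyticAt_fderiv_single hf i) := by
  refine (mkOn_eq_iff _ _).2 ?_
  filter_upwards [(rep_mkOn hf).fderiv (𝕜 := ℂ)] with x hx
  rw [hx]

lemma mkOn_add (hf : AnalyticAt ℂ f 0) (hg : AnalyticAt ℂ g 0) :
    mkOn f hf + mkOn g hg = mkOn (fun x => f x + g x) (hf.add hg) := rfl

lemma mkOn_mul (hf : AnalyticAt ℂ f 0) (hg : AnalyticAt ℂ g 0) :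
    mkOn f hf * mkOn g hg = mkOn (fun x => f x * g x) (hf.mul hg) := rfl

lemma mkOn_smul (c : ℂ) (hf : AnalyticAt ℂ f 0) :
    c • mkOn f hf = mkOn (fun x => c * f x) (analyticAt_const.mul hf) := rfl

lemma mkOn_const (c : ℂ) :
    mkOn (fun _ : Fin n → ℂ => c) analyticAt_const = algebraMap ℂ (On n) c := rfl

lemma mkOn_sum {ι : Type*} (s : Finset ι) {f : ι → (Fin n → ℂ) → ℂ}
    (hf : ∀ i, AnalyticAt ℂ (f i) 0) :
    ∑ i ∈ s, mkOn (f i) (hf i) =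
      mkOn (fun x => ∑ i ∈ s, f i x) (Finset.analyticAt_fun_sum s fun i _ => hf i) := by
  classical
  induction s using Finset.induction_on with
  | empty => rfl
  | insert i s hi ih =>
    rw [Finset.sum_insert hi, ih, mkOn_add, mkOn_eq_iff]
    exact .of_forall fun x => (Finset.sum_insert hi (f := fun i => f i x)).symm

variable (n) in
/-- Evaluation at the origin, `ev0`, as an algebra homomorphism. -/
def ev0Hom : On n →ₐ[ℂ] ℂ where
  toFun := ev0
  map_one' := ev0_mkOn analyticAt_const
  map_zero' := ev0_mkOn analyticAt_const
  map_mul' a b := by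
    obtain ⟨f, hf, rfl⟩ := exists_mkOn a
    obtain ⟨g, hg, rfl⟩ := exists_mkOn b
    simp only [mkOn_mul, ev0_mkOn]
  map_add' a b := by
    obtain ⟨f, hf, rfl⟩ := exists_mkOn a
    obtain ⟨g, hg, rfl⟩ := exists_mkOn b
    simp only [mkOn_add, ev0_mkOn]
  commutes' _ := ev0_mkOn analyticAt_const

@[simp]
lemma ev0Hom_apply (a : On n) : ev0Hom n a = ev0 a := rfl

lemma mem_mId {a : On n} : a ∈ mId n ↔ ev0 a = 0 := by
  obtain ⟨f, hf, rfl⟩ := exists_mkOn a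
  rw [ev0_mkOn, mId, RingHom.mem_ker]
  exact Filter.Germ.coe_eq (f := f) (g := fun _ => 0)

lemma mkOn_mem_IX {X : Set (Fin n → ℂ)} (hf : AnalyticAt ℂ f 0) :
    mkOn f hf ∈ IX n X ↔ ∀ᶠ x in 𝓝 0, x ∈ X → f x = 0 := by
  rw [IX, RingHom.mem_ker, ← eventually_nhdsWithin_iff]
  exact Filter.Germ.coe_eq (f := f) (g := fun _ => 0)

/-- The partial derivative `pd i` as a derivation of `𝒪ₙ`. -/
def pdDerivation (i : Fin n) : Derivation ℂ (On n) (On n) :=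
  Derivation.mk'
    { toFun := pd i
      map_add' := fun a b => by
        obtain ⟨f, hf, rfl⟩ := exists_mkOn a
        obtain ⟨g, hg, rfl⟩ := exists_mkOn b
        rw [mkOn_add, pd_mkOn, pd_mkOn, pd_mkOn, mkOn_add, mkOn_eq_iff]
        filter_upwards [hf.eventually_analyticAt, hg.eventually_analyticAt] with x hfx hgx
        rw [fderiv_fun_add hfx.differentiableAt hgx.differentiableAt, add_apply]
      map_smul' := fun c a => by
        obtain ⟨f, hf, rfl⟩ := exists_mkOn a
        rw [mkOn_smul, pd_mkOn, pd_mkOn, RingHom.id_apply, mkOn_smul, mkOn_eq_iff]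
        filter_upwards [hf.eventually_analyticAt] with x hfx
        rw [fderiv_const_mul hfx.differentiableAt, smul_apply, smul_eq_mul] }
    fun a b => by
      obtain ⟨f, hf, rfl⟩ := exists_mkOn a
      obtain ⟨g, hg, rfl⟩ := exists_mkOn b
      change pd i _ = _ * pd i _ + _ * pd i _
      rw [mkOn_mul, pd_mkOn, pd_mkOn, pd_mkOn, mkOn_mul, mkOn_mul, mkOn_add, mkOn_eq_iff]
      filter_upwards [hf.eventually_analyticAt, hg.eventually_analyticAt] with x hfx hgx
      rw [fderiv_fun_mul hfx.differentiableAt hgx.differentiableAt]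
      rfl

@[simp]
lemma pdDerivation_apply (i : Fin n) (a : On n) : pdDerivation i a = pd i a := rfl

lemma pd_sub (i : Fin n) (a b : On n) : pd i (a - b) = pd i a - pd i b :=
  (pdDerivation i).map_sub a b

lemma pd_mul (i : Fin n) (a b : On n) : pd i (a * b) = a * pd i b + b * pd i a :=
  (pdDerivation i).leibniz a b

lemma analyticAt_coord (i : Fin n) : AnalyticAt ℂ (fun x : Fin n → ℂ => x i) 0 :=
  (ContinuousLinearMap.proj (R := ℂ) (φ := fun _ : Fin n => ℂ) i).analyticAt 0

lemma mkOn_coord (i : Fin n) : mkOn (fun x => x i) (analyticAt_coord i) = coordG i := rfl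

lemma ev0_coordG (j : Fin n) : ev0 (coordG j) = 0 :=
  ev0_mkOn _

lemma pd_coordG (i j : Fin n) :
    pd i (coordG j) = algebraMap ℂ (On n) ((Pi.single i 1 : Fin n → ℂ) j) := by
  rw [← mkOn_coord, pd_mkOn, ← mkOn_const, mkOn_eq_iff]
  refine .of_forall fun x => ?_
  have hproj : fderiv ℂ (fun x : Fin n → ℂ => x j) x = ContinuousLinearMap.proj j :=
    (ContinuousLinearMap.proj (R := ℂ) (φ := fun _ : Fin n => ℂ) j).fderiv
  exact DFunLike.congr_fun hproj _

lemma isUnit_of_ev0_ne_zero {a : On n} (ha : ev0 a ≠ 0) : IsUnit a := by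
  obtain ⟨f, hf, rfl⟩ := exists_mkOn a
  rw [ev0_mkOn] at ha
  refine IsUnit.of_mul_eq_one (mkOn (fun x => (f x)⁻¹) (hf.inv ha)) ?_
  rw [mkOn_mul, ← map_one (algebraMap ℂ (On n)), ← mkOn_const, mkOn_eq_iff]
  filter_upwards [hf.continuousAt.eventually_ne ha] with x hx
  exact mul_inv_cancel₀ hx

lemma mId_le_jacobson_bot : mId n ≤ Ideal.jacobson ⊥ := fun a ha => by
  refine Ideal.mem_jacobson_bot.2 fun b => isUnit_of_ev0_ne_zero ?_
  have ha' : ev0Hom n a = 0 := mem_mId.1 ha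
  rw [← ev0Hom_apply, map_add, map_mul, ha', map_one, zero_mul, zero_add]
  exact one_ne_zero

lemma exists_pow_le_of_finiteDimensional {R : Type*} [CommRing R] [Algebra ℂ R] {I M : Ideal R}
    (hM : M ≤ Ideal.jacobson ⊥) (hI : FiniteDimensional ℂ (R ⧸ I)) : ∃ N, M ^ N ≤ I := by
  have : IsArtinianRing (R ⧸ I) := IsArtinianRing.of_finite ℂ _
  obtain ⟨N, hN⟩ := IsArtinianRing.isNilpotent_jacobson_bot (R := R ⧸ I)
  have hmap : M.map (Ideal.Quotient.mk I) ≤ Ideal.jacobson ⊥ := by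
    refine Ideal.map_le_iff_le_comap.2 fun a ha => Ideal.mem_jacobson_bot.2 fun b => ?_
    obtain ⟨b, rfl⟩ := Ideal.Quotient.mk_surjective b
    simpa using (Ideal.mem_jacobson_bot.1 (hM ha) b).map (Ideal.Quotient.mk I)
  refine ⟨N, ?_⟩
  rw [← Ideal.mk_ker (I := I), ← Ideal.map_eq_bot_iff_le_ker, Ideal.map_pow, eq_bot_iff,
    ← Ideal.zero_eq_bot, ← hN]
  exact Ideal.pow_right_mono hmap N

end GermRing

section Hadamard

lemma exists_analyticAt_eq_add_apply {𝕜 E F : Type*} [NontriviallyNormedField 𝕜]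
    [NormedAddCommGroup E] [NormedSpace 𝕜 E] [NormedAddCommGroup F] [NormedSpace 𝕜 F]
    [CompleteSpace F] {f : E → F} (hf : AnalyticAt 𝕜 f 0) :
    ∃ Q : E → E →L[𝕜] F, AnalyticAt 𝕜 Q 0 ∧ ∀ᶠ x in 𝓝 0, f x = f 0 + Q x x := by
  obtain ⟨p, r, hp⟩ := hf
  have hr : 0 < p.shift.radius := by
    rw [FormalMultilinearSeries.radius_shift]
    exact hp.r_pos.trans_le hp.r_le
  have hs := p.shift.hasFPowerSeriesOnBall hr
  refine ⟨p.shift.sum, hs.analyticAt, ?_⟩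
  filter_upwards [Metric.eball_mem_nhds (0 : E) hp.r_pos,
    Metric.eball_mem_nhds (0 : E) hr] with x hx hx'
  have hfx := hp.hasSum hx
  have hQx := (ContinuousLinearMap.apply 𝕜 F x).hasSum (hs.hasSum hx')
  rw [zero_add] at hfx hQx
  rw [← hasSum_nat_add_iff' 1, Finset.sum_range_one, hp.coeff_zero] at hfx
  have hshift (k : ℕ) : p (k + 1) (fun _ => x) = p.shift k (fun _ => x) x := by
    rw [FormalMultilinearSeries.shift, ContinuousMultilinearMap.curryRight_apply]
    congr 1
    ext j : 1
    refine Fin.lastCases ?_ (fun j => ?_) j <;> simp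
  simp only [hshift] at hfx
  exact (sub_eq_iff_eq_add'.1 (hfx.unique hQx))

lemma exists_eq_ev0_add_sum (a : On n) : ∃ k : Fin n → On n,
    a = algebraMap ℂ (On n) (ev0 a) + ∑ i, k i * coordG i := by
  obtain ⟨f, hf, rfl⟩ := exists_mkOn a
  obtain ⟨Q, hQ, hfQ⟩ := exists_analyticAt_eq_add_apply hf
  have hk (i : Fin n) : AnalyticAt ℂ (fun x => Q x (Pi.single i 1)) 0 :=
    analyticAt_clm_apply_const hQ _
  refine ⟨fun i => mkOn _ (hk i), ?_⟩
  simp only [← mkOn_coord, mkOn_mul]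
  rw [mkOn_sum _ fun i => (hk i).fun_mul (analyticAt_coord i), ev0_mkOn, ← mkOn_const, mkOn_add,
    mkOn_eq_iff]
  filter_upwards [hfQ] with x hx
  rw [hx]
  conv_lhs => enter [2, 2]; rw [← Finset.univ_sum_single x]
  simp only [map_sum]
  congr 1
  refine Finset.sum_congr rfl fun i _ => ?_
  rw [mul_comm, ← smul_eq_mul, ← map_smul, ← Pi.single_smul, smul_eq_mul, mul_one]

end Hadamard

section Filtration

open MvPolynomial (idealOfVars pderiv)

variable {R A : Type*} [CommSemiring R] [CommSemiring A] [Algebra R A] {D : Derivation R A A}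
  {I : Ideal A} {k : ℕ} {a : A}

lemma derivation_mem_pow_of_forall_mem (hD : ∀ a ∈ I, D a ∈ I) (ha : a ∈ I ^ k) :
    D a ∈ I ^ k := by
  induction k generalizing a with
  | zero => simp
  | succ k ih =>
    rw [pow_succ] at ha ⊢
    induction ha using Submodule.mul_induction_on' with
    | mem_mul_mem x hx y hy =>
      rw [D.leibniz, smul_eq_mul, smul_eq_mul, mul_comm y]
      exact add_mem (Ideal.mul_mem_mul hx (hD y hy)) (Ideal.mul_mem_mul (ih hx) hy)
    | add x _ y _ hx hy => exact D.map_add x y ▸ add_mem hx hy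

lemma derivation_aeval {σ : Type*} [Fintype σ] (D : Derivation R A A) (Y : σ → A)
    (P : MvPolynomial σ R) :
    D (MvPolynomial.aeval Y P) = ∑ j, D (Y j) * MvPolynomial.aeval Y (pderiv j P) := by
  classical
  induction P using MvPolynomial.induction_on with
  | C c => simp [MvPolynomial.algHom_C]
  | add p q hp hq => simp only [map_add, hp, hq, mul_add, Finset.sum_add_distrib]
  | mul_X p i hp =>
    simp only [map_mul, MvPolynomial.aeval_X, Derivation.leibniz, hp, smul_eq_mul, map_add,
      mul_add, Finset.sum_add_distrib, MvPolynomial.pderiv_X, Finset.mul_sum]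
    congr 1
    · rw [Finset.sum_eq_single i (fun j _ hj => by simp [hj.symm]) (by simp)]
      simp [mul_comm]
    · exact Finset.sum_congr rfl fun j _ => mul_left_comm _ _ _

lemma mem_pow_succ_idealOfVars {σ R : Type*} [CommRing R] [CharZero R] [NoZeroDivisors R]
    {P : MvPolynomial σ R} (h0 : MvPolynomial.constantCoeff P = 0)
    (hP : ∀ j, pderiv j P ∈ idealOfVars σ R ^ k) : P ∈ idealOfVars σ R ^ (k + 1) := by
  rw [MvPolynomial.mem_pow_idealOfVars_iff']
  intro m hm
  rcases eq_or_ne m 0 with rfl | hm0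
  · exact h0
  obtain ⟨j, hj⟩ := Finsupp.ne_iff.1 hm0
  obtain ⟨m, rfl⟩ : ∃ m', m = m' + Finsupp.single j 1 :=
    ⟨m - Finsupp.single j 1, (tsub_add_cancel_of_le (by
      simpa [Finsupp.single_le_iff, Nat.one_le_iff_ne_zero] using hj)).symm⟩
  have hcoeff := (MvPolynomial.mem_pow_idealOfVars_iff' _ _).1 (hP j) m (by
    rw [map_add, Finsupp.degree_single] at hm
    lia)
  rw [MvPolynomial.coeff_pderiv] at hcoeff
  exact (mul_eq_zero.1 hcoeff).resolve_right (by norm_cast)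

end Filtration

section Gradient

variable (n) in
/-- The gradient `(∂₁a(0), …, ∂ₙa(0))` of a germ at the origin, as a linear map. -/
def gradZero : On n →ₗ[ℂ] (Fin n → ℂ) :=
  LinearMap.pi fun i => (ev0Hom n).toLinearMap ∘ₗ (pdDerivation i).toLinearMap

lemma gradZero_apply (a : On n) (i : Fin n) : gradZero n a i = ev0 (pd i a) := rfl

lemma gradZero_coordG (j : Fin n) : gradZero n (coordG j) = Pi.single j 1 := by
  ext i
  rw [gradZero_apply, pd_coordG, ← ev0Hom_apply, AlgHom.commutes, Pi.single_comm]
  rfl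

lemma gradZero_mul (a b : On n) :
    gradZero n (a * b) = ev0 a • gradZero n b + ev0 b • gradZero n a := by
  ext i
  simp only [gradZero_apply, pd_mul, ← ev0Hom_apply, map_add, map_mul, Pi.add_apply, Pi.smul_apply,
    smul_eq_mul]

lemma mId_eq_span_coordG : mId n = Ideal.span (Set.range coordG) := by
  refine le_antisymm (fun a ha => ?_) (Ideal.span_le.2 ?_)
  · obtain ⟨k, hk⟩ := exists_eq_ev0_add_sum a
    rw [hk, mem_mId.1 ha, map_zero, zero_add]
    exact sum_mem fun i _ => Ideal.mul_mem_left _ _ (Ideal.subset_span ⟨i, rfl⟩)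
  · rintro _ ⟨i, rfl⟩
    exact mem_mId.2 (ev0_coordG i)

lemma mem_mId_sq_iff {a : On n} : a ∈ mId n ^ 2 ↔ a ∈ mId n ∧ gradZero n a = 0 := by
  refine ⟨fun ha => ⟨Ideal.pow_le_self two_ne_zero ha, funext fun i => ?_⟩, fun ⟨ha, hgrad⟩ => ?_⟩
  · exact mem_mId.1 (pow_one (mId n) ▸ derivation_mem_pow (pdDerivation i) ha)
  · obtain ⟨k, hk⟩ := exists_eq_ev0_add_sum a
    rw [mem_mId.1 ha, map_zero, zero_add] at hk
    have hk0 (i : Fin n) : ev0 (k i) = 0 := by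
      rw [hk] at hgrad
      simpa [gradZero_mul, ev0_coordG, gradZero_coordG, Finset.sum_apply, Pi.single_apply] using
        congr_fun hgrad i
    rw [hk, pow_two]
    exact sum_mem fun i _ => Ideal.mul_mem_mul (mem_mId.2 (hk0 i)) (mem_mId.2 (ev0_coordG i))

/-- The derivation of `𝒪ₙ` defined by a vector field; its action on germs is `applyVF`. -/
def vfDerivation (δ : Fin n → On n) : Derivation ℂ (On n) (On n) :=
  ∑ i, δ i • pdDerivation i

@[simp]
lemma vfDerivation_apply (δ : Fin n → On n) (a : On n) : vfDerivation δ a = applyVF δ a := by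
  change Derivation.coeFnAddMonoidHom (∑ i, δ i • pdDerivation i) a = _
  simp [applyVF, Derivation.coeFnAddMonoidHom]

variable {δ : Fin n → On n}

lemma applyVF_mem_mId (hδ : ∀ i, δ i ∈ mId n) (a : On n) : applyVF δ a ∈ mId n :=
  sum_mem fun i _ => Ideal.mul_mem_right _ _ (hδ i)

lemma gradZero_applyVF (hδ : ∀ i, δ i ∈ mId n) (a : On n) :
    gradZero n (applyVF δ a) = (linPart δ).mulVec (gradZero n a) := by
  ext i
  simp only [applyVF, map_sum, gradZero_mul, fun j => mem_mId.1 (hδ j), zero_smul, zero_add,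
    Finset.sum_apply, Pi.smul_apply, smul_eq_mul, Matrix.mulVec, dotProduct]
  exact Finset.sum_congr rfl fun j _ => mul_comm _ _

end Gradient

section CoordSystem

open MvPolynomial (idealOfVars pderiv)

/-- A system of local coordinates of `(ℂⁿ, 0)`: germs vanishing at the origin whose differentials
there are linearly independent. -/
structure IsCoordSystem (Y : Fin n → On n) : Prop where
  ev0_eq_zero (i : Fin n) : ev0 (Y i) = 0
  linearIndependent : LinearIndependent ℂ fun i => gradZero n (Y i)

lemma isCoordSystem_coordG : IsCoordSystem (coordG (n := n)) where
  ev0_eq_zero := ev0_coordG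
  linearIndependent := by
    simp only [gradZero_coordG]
    exact Pi.linearIndependent_single_one (Fin n) ℂ

lemma pd_aeval (Y : Fin n → On n) (P : MvPolynomial (Fin n) ℂ) :
    (fun i => pd i (MvPolynomial.aeval Y P)) =
      (Matrix.of fun i j => pd i (Y j)).mulVec fun j => MvPolynomial.aeval Y (pderiv j P) :=
  funext fun i => derivation_aeval (pdDerivation i) Y P

namespace IsCoordSystem

variable {Y : Fin n → On n} {k N : ℕ} {P : MvPolynomial (Fin n) ℂ}

lemma mem_mId (hY : IsCoordSystem Y) (i : Fin n) : Y i ∈ mId n :=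
  _root_.mem_mId.2 (hY.ev0_eq_zero i)

lemma mId_eq_span (hY : IsCoordSystem Y) : mId n = Ideal.span (Set.range Y) := by
  refine le_antisymm ?_ (Ideal.span_le.2 (Set.range_subset_iff.2 hY.mem_mId))
  refine Submodule.le_of_le_smul_of_le_jacobson_bot
    (mId_eq_span_coordG ▸ Submodule.fg_span (Set.finite_range _)) mId_le_jacobson_bot fun a ha => ?_
  obtain ⟨c, hc⟩ : ∃ c : Fin n → ℂ, ∑ i, c i • gradZero n (Y i) = gradZero n a :=
    (Submodule.mem_span_range_iff_exists_fun ℂ).1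
      (hY.linearIndependent.span_eq_top_of_card_eq_finrank' (by simp) ▸ Submodule.mem_top)
  have hsum : ∑ i, c i • Y i ∈ Ideal.span (Set.range Y) := sum_mem fun i _ =>
    Algebra.smul_def (c i) (Y i) ▸ Ideal.mul_mem_left _ _ (Ideal.subset_span ⟨i, rfl⟩)
  rw [← add_sub_cancel (∑ i, c i • Y i) a, smul_eq_mul, ← pow_two]
  refine Submodule.add_mem_sup hsum (mem_mId_sq_iff.2 ⟨sub_mem ha (sum_mem fun i _ => ?_), ?_⟩)
  · rw [Algebra.smul_def]
    exact Ideal.mul_mem_left _ _ (hY.mem_mId i)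
  · rw [map_sub, map_sum, sub_eq_zero, ← hc]
    simp only [map_smul]

lemma map_aeval_idealOfVars (hY : IsCoordSystem Y) :
    (idealOfVars (Fin n) ℂ).map (MvPolynomial.aeval Y (R := ℂ)) = mId n := by
  rw [hY.mId_eq_span, MvPolynomial.idealOfVars, Ideal.map_span, ← Set.range_comp]
  congr 2
  ext i : 1
  exact MvPolynomial.aeval_X Y i

lemma exists_aeval_sub_mem_pow (hY : IsCoordSystem Y) (k : ℕ) (a : On n) :
    ∃ P : MvPolynomial (Fin n) ℂ, a - MvPolynomial.aeval Y P ∈ mId n ^ k := by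
  induction k generalizing a with
  | zero => exact ⟨0, by simp⟩
  | succ k ih =>
    have ha : a - algebraMap ℂ (On n) (ev0 a) ∈ mId n := by
      rw [_root_.mem_mId, ← ev0Hom_apply, map_sub, AlgHom.commutes, ev0Hom_apply]
      exact sub_self _
    rw [hY.mId_eq_span, Ideal.mem_span_range_iff_exists_fun] at ha
    obtain ⟨c, hc⟩ := ha
    choose P hP using fun i => ih (c i)
    refine ⟨MvPolynomial.C (ev0 a) + ∑ i, P i * MvPolynomial.X i, ?_⟩
    have hdiff : a - MvPolynomial.aeval Y (MvPolynomial.C (ev0 a) + ∑ i, P i * MvPolynomial.X i) =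
        ∑ i, (c i - MvPolynomial.aeval Y (P i)) * Y i := by
      simp only [map_add, map_sum, map_mul, MvPolynomial.aeval_X, MvPolynomial.algHom_C, sub_mul,
        Finset.sum_sub_distrib, hc, sub_sub]
    rw [hdiff, pow_succ]
    exact sum_mem fun i _ => Ideal.mul_mem_mul (hP i) (hY.mem_mId i)

lemma ev0_aeval (hY : IsCoordSystem Y) (P : MvPolynomial (Fin n) ℂ) :
    ev0 (MvPolynomial.aeval Y P) = MvPolynomial.constantCoeff P := by
  have hY0 : (fun i => ev0Hom n (Y i)) = 0 := funext hY.ev0_eq_zero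
  rw [← ev0Hom_apply, MvPolynomial.comp_aeval_apply, hY0, MvPolynomial.aeval_zero]
  rfl

lemma isUnit_det_jacobian (hY : IsCoordSystem Y) :
    IsUnit (Matrix.of fun i j => pd i (Y j)).det := by
  refine isUnit_of_ev0_ne_zero ?_
  have hrows : ((ev0Hom n).mapMatrix (Matrix.of fun i j => pd i (Y j))).transpose =
      Matrix.of fun i => gradZero n (Y i) := rfl
  rw [← ev0Hom_apply, AlgHom.map_det, ← Matrix.det_transpose, hrows]
  exact ((Matrix.isUnit_iff_isUnit_det _).1
    (Matrix.linearIndependent_rows_iff_isUnit.1 hY.linearIndependent)).ne_zero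

lemma aeval_pderiv_mem (hY : IsCoordSystem Y) {I : Ideal (On n)}
    (hP : ∀ i, pd i (MvPolynomial.aeval Y P) ∈ I) (j : Fin n) :
    MvPolynomial.aeval Y (pderiv j P) ∈ I := by
  have hinv := congr_arg (Matrix.of fun i j => pd i (Y j))⁻¹.mulVec (pd_aeval Y P)
  rw [Matrix.mulVec_mulVec, Matrix.nonsing_inv_mul _ hY.isUnit_det_jacobian,
    Matrix.one_mulVec] at hinv
  rw [← congr_fun hinv j, Matrix.mulVec, dotProduct]
  exact sum_mem fun i _ => Ideal.mul_mem_left _ _ (hP i)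

lemma aeval_mem_pow_iff (hY : IsCoordSystem Y) :
    MvPolynomial.aeval Y P ∈ mId n ^ k ↔ P ∈ idealOfVars (Fin n) ℂ ^ k := by
  refine ⟨fun hP => ?_, fun hP => ?_⟩
  · induction k generalizing P with
    | zero => simp
    | succ k ih =>
      refine mem_pow_succ_idealOfVars ?_ fun j => ih ?_
      · rw [← hY.ev0_aeval, ← _root_.mem_mId]
        exact Ideal.pow_le_self k.succ_ne_zero hP
      · exact hY.aeval_pderiv_mem (fun i => derivation_mem_pow (pdDerivation i) hP) j
  · rw [← hY.map_aeval_idealOfVars, ← Ideal.map_pow]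
    exact Ideal.mem_map_of_mem _ hP

lemma surjective_mk_aeval (hY : IsCoordSystem Y) (k : ℕ) : Function.Surjective
    ((Ideal.Quotient.mkₐ ℂ (mId n ^ k)).comp (MvPolynomial.aeval Y)) := fun x => by
  obtain ⟨x, rfl⟩ := Ideal.Quotient.mk_surjective x
  obtain ⟨P, hP⟩ := hY.exists_aeval_sub_mem_pow k x
  exact ⟨P, (Ideal.Quotient.eq.2 hP).symm⟩

lemma exists_mem_of_mem_map_sup (hY : IsCoordSystem Y) {I : Ideal (MvPolynomial (Fin n) ℂ)}
    {a : On n} (ha : a ∈ I.map (MvPolynomial.aeval Y (R := ℂ)) ⊔ mId n ^ k) :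
    ∃ P ∈ I, a - MvPolynomial.aeval Y P ∈ mId n ^ k := by
  have hmem := Ideal.mem_map_of_mem (Ideal.Quotient.mkₐ ℂ (mId n ^ k)) ha
  rw [Ideal.map_sup, Ideal.map_mapₐ] at hmem
  obtain ⟨P, hP, hPa⟩ := (Ideal.mem_map_iff_of_surjective _ (hY.surjective_mk_aeval k)).1
    (sup_le le_rfl ((Ideal.map_quotient_self (mId n ^ k)).trans_le bot_le) hmem)
  exact ⟨P, hP, Ideal.Quotient.eq.1 hPa.symm⟩

lemma idealOfVars_mem_minimalPrimes (hY : IsCoordSystem Y)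
    {I : Ideal (MvPolynomial (Fin n) ℂ)} (hI : I ≤ idealOfVars (Fin n) ℂ)
    (h : mId n ^ N ≤ I.map (MvPolynomial.aeval Y (R := ℂ)) ⊔ mId n ^ (N + 1)) :
    idealOfVars (Fin n) ℂ ∈ I.minimalPrimes := by
  refine mem_minimalPrimes_of_pow_le hI (N := N) fun P hP => ?_
  obtain ⟨q, hq, hPq⟩ := hY.exists_mem_of_mem_map_sup (h (hY.aeval_mem_pow_iff.2 hP))
  rw [← map_sub, hY.aeval_mem_pow_iff] at hPq
  rw [← add_sub_cancel q P]
  exact Submodule.add_mem_sup hq hPq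

end IsCoordSystem

lemma finite_of_surjective_mvPolynomial {R A σ : Type*} [CommRing R] [CommRing A] [Algebra R A]
    [Finite σ] {φ : MvPolynomial σ R →ₐ[R] A} (hφ : Function.Surjective φ)
    (hint : ∀ i, IsIntegral R (φ (MvPolynomial.X i))) : Module.Finite R A := by
  have hfg := fg_adjoin_of_finite (Set.finite_range (φ ∘ MvPolynomial.X))
    (Set.forall_mem_range.2 hint)
  have hrange := (AlgHom.range_eq_top φ).2 hφ
  rw [MvPolynomial.aeval_unique φ, ← Algebra.adjoin_range_eq_range_aeval] at hrange
  exact ⟨by rwa [hrange] at hfg⟩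

instance finiteDimensional_quotient_mId_pow (k : ℕ) : FiniteDimensional ℂ (On n ⧸ mId n ^ k) := by
  refine finite_of_surjective_mvPolynomial (A := On n ⧸ mId n ^ k)
    (φ := (Ideal.Quotient.mkₐ ℂ (mId n ^ k)).comp (MvPolynomial.aeval coordG))
    (isCoordSystem_coordG.surjective_mk_aeval k) fun i => .of_pow k.succ_pos ?_
  have hi : coordG i ^ (k + 1) ∈ mId n ^ k :=
    Ideal.pow_le_pow_right k.le_succ (Ideal.pow_mem_pow (mem_mId.2 (ev0_coordG i)) _)
  rw [← map_pow, AlgHom.comp_apply, map_pow, MvPolynomial.aeval_X]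
  exact (Ideal.Quotient.eq_zero_iff_mem.2 hi).symm ▸ isIntegral_zero

end CoordSystem

section Truncation

open Module.End (maxGenEigenspace)

variable {δ : Fin n → On n} {k N : ℕ}

/-- The derivation of the finite-dimensional algebra `𝒪ₙ ⧸ 𝔪ᵏ` induced by a vector field vanishing
at the origin. -/
def truncDerivation (hδ : ∀ i, δ i ∈ mId n) (k : ℕ) :
    Derivation ℂ (On n ⧸ mId n ^ k) (On n ⧸ mId n ^ k) :=
  Derivation.liftOfSurjective (Ideal.Quotient.mkₐ_surjective ℂ (mId n ^ k))
    (d := (vfDerivation δ)) fun a ha => by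
      refine Ideal.Quotient.eq_zero_iff_mem.2 (derivation_mem_pow_of_forall_mem (fun b _ => ?_)
        (Ideal.Quotient.eq_zero_iff_mem.1 ha))
      exact vfDerivation_apply δ b ▸ applyVF_mem_mId hδ b

lemma truncDerivation_mk (hδ : ∀ i, δ i ∈ mId n) (k : ℕ) (a : On n) :
    truncDerivation hδ k (Ideal.Quotient.mk (mId n ^ k) a) =
      Ideal.Quotient.mk (mId n ^ k) (applyVF δ a) := by
  rw [← vfDerivation_apply]
  exact Derivation.liftOfSurjective_apply _ _ a

lemma exists_isUnit_mul_mk_mem_maxGenEigenspace (hδ : ∀ i, δ i ∈ mId n) {h α : On n}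
    (hh : applyVF δ h = α * h) (k : ℕ) :
    ∃ u, IsUnit u ∧ Ideal.Quotient.mk (mId n ^ (k + 1)) (u * h) ∈
      maxGenEigenspace (truncDerivation hδ (k + 1)).toLinearMap (ev0 α) := by
  let ε : (On n ⧸ mId n ^ (k + 1)) →ₐ[ℂ] ℂ := Ideal.Quotient.liftₐ _ (ev0Hom n) fun a ha =>
    mem_mId.1 (Ideal.pow_le_self k.succ_ne_zero ha)
  have hε (a : On n) : ε (Ideal.Quotient.mk _ a) = ev0 a := rfl
  obtain ⟨u, hu, hmem⟩ := exists_mul_mem_maxGenEigenspace (A := On n ⧸ mId n ^ (k + 1)) (ε := ε)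
    (D := truncDerivation hδ (k + 1)) (α := Ideal.Quotient.mk _ α) (x := Ideal.Quotient.mk _ h)
    (fun x => by
      obtain ⟨a, rfl⟩ := Ideal.Quotient.mk_surjective x
      rw [truncDerivation_mk, hε]
      exact mem_mId.1 (applyVF_mem_mId hδ a))
    (by rw [truncDerivation_mk, hh, map_mul])
  obtain ⟨u, rfl⟩ := Ideal.Quotient.mk_surjective u
  rw [hε] at hu hmem
  exact ⟨u, isUnit_of_ev0_ne_zero (hu.symm ▸ one_ne_zero), by rwa [map_mul]⟩

variable (n) in
/-- The `1`-jet `a ↦ (a(0), grad a(0))` at the origin, on `𝒪ₙ ⧸ 𝔪ᵏ⁺²`. -/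
def oneJet (k : ℕ) : (On n ⧸ mId n ^ (k + 2)) →ₗ[ℂ] ℂ × (Fin n → ℂ) :=
  Submodule.liftQ ((mId n ^ (k + 2)).restrictScalars ℂ)
    ((ev0Hom n).toLinearMap.prod (gradZero n)) fun a ha => by
      have ha2 := mem_mId_sq_iff.1 (Ideal.pow_le_pow_right (Nat.le_add_left 2 k) ha)
      exact Prod.ext (mem_mId.1 ha2.1) ha2.2

lemma oneJet_mk (k : ℕ) (a : On n) :
    oneJet n k (Ideal.Quotient.mk (mId n ^ (k + 2)) a) = (ev0 a, gradZero n a) := rfl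

lemma surjective_oneJet (k : ℕ) : Function.Surjective (oneJet n k) := fun ⟨c, v⟩ => by
  refine ⟨Ideal.Quotient.mk _ (algebraMap ℂ (On n) c + ∑ i, v i • coordG i), ?_⟩
  have hgrad : gradZero n (algebraMap ℂ (On n) c) = 0 := funext fun i => by
    rw [gradZero_apply, ← pdDerivation_apply, Derivation.map_algebraMap, ← ev0Hom_apply, map_zero]
    rfl
  rw [oneJet_mk, ← ev0Hom_apply, map_add, map_add, map_sum, map_sum, hgrad]
  simp only [map_smul, AlgHom.commutes, ev0Hom_apply, ev0_coordG, gradZero_coordG, smul_zero,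
    Finset.sum_const_zero, add_zero, zero_add, Algebra.algebraMap_self, RingHom.id_apply]
  exact Prod.ext rfl (pi_eq_sum_univ' v).symm

lemma oneJet_comp_truncDerivation (hδ : ∀ i, δ i ∈ mId n) (k : ℕ) :
    oneJet n k ∘ₗ (truncDerivation hδ (k + 2)).toLinearMap =
      (LinearMap.prodMap 0 (linPart δ).toLin') ∘ₗ oneJet n k := by
  refine LinearMap.ext fun x => ?_
  obtain ⟨a, rfl⟩ := Ideal.Quotient.mk_surjective x
  change oneJet n k (truncDerivation hδ (k + 2) (Ideal.Quotient.mk _ a)) = _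
  rw [truncDerivation_mk, LinearMap.comp_apply, oneJet_mk, oneJet_mk,
    mem_mId.1 (applyVF_mem_mId hδ a), gradZero_applyVF hδ]
  rfl

lemma exists_isCoordSystem_mem_maxGenEigenspace (hδ : ∀ i, δ i ∈ mId n) (k : ℕ) :
    ∃ (Y : Fin n → On n) (w : Fin n → ℂ), IsCoordSystem Y ∧
      (∀ i, Ideal.Quotient.mk (mId n ^ (k + 2)) (Y i) ∈
        maxGenEigenspace (truncDerivation hδ (k + 2)).toLinearMap (w i)) ∧
      ∀ μ, (linPart δ).charpoly.IsRoot μ → ∃ i, w i = μ := by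
  obtain ⟨b, w, hbw⟩ := exists_basis_mem_maxGenEigenspace (ι := Fin n) (linPart δ).toLin' (by simp)
  have hlift (i : Fin n) : ∃ y, ev0 y = 0 ∧ gradZero n y = b i ∧
      Ideal.Quotient.mk (mId n ^ (k + 2)) y ∈
        maxGenEigenspace (truncDerivation hδ (k + 2)).toLinearMap (w i) := by
    have hb := map_mem_maxGenEigenspace (π := LinearMap.inr ℂ ℂ (Fin n → ℂ))
      (T := LinearMap.prodMap 0 (linPart δ).toLin') (LinearMap.ext fun x => by simp) (hbw i)
    rw [← map_maxGenEigenspace (surjective_oneJet k) (oneJet_comp_truncDerivation hδ k)] at hb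
    obtain ⟨y, hy, hyb⟩ := hb
    obtain ⟨y, rfl⟩ := Ideal.Quotient.mk_surjective y
    rw [oneJet_mk, LinearMap.inr_apply, Prod.mk.injEq] at hyb
    exact ⟨y, hyb.1, hyb.2, hy⟩
  choose Y hY0 hYb hY using hlift
  refine ⟨Y, w, ⟨hY0, funext hYb ▸ b.linearIndependent⟩, hY, fun μ hμ => ?_⟩
  refine exists_eq_of_hasEigenvalue b.span_eq hbw ?_
  rwa [Module.End.hasEigenvalue_iff_isRoot_charpoly, Matrix.charpoly_toLin']

end Truncation

section WeightedApproximation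

open MvPolynomial (idealOfVars pderiv IsWeightedHomogeneous)
open Module.End (maxGenEigenspace)

variable {R ι κ : Type*} [CommRing R]

lemma minorsIdeal_mulVec_le [Fintype κ] (A : Matrix ι κ R) (a b : κ → R) :
    minorsIdeal (A.mulVec a) (A.mulVec b) ≤ minorsIdeal a b := by
  refine minorsIdeal_le_iff.2 fun j k => ?_
  have hexpand : A.mulVec a j * A.mulVec b k - A.mulVec a k * A.mulVec b j =
      ∑ p, ∑ q, A j p * A k q * (a p * b q - a q * b p) := by
    simp only [Matrix.mulVec, dotProduct, Finset.sum_mul_sum, mul_sub, Finset.sum_sub_distrib]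
    congr 1
    · exact Finset.sum_congr rfl fun p _ => Finset.sum_congr rfl fun q _ => by ring
    · rw [Finset.sum_comm]
      exact Finset.sum_congr rfl fun p _ => Finset.sum_congr rfl fun q _ => by ring
  rw [hexpand]
  exact sum_mem fun p _ => sum_mem fun q _ =>
    Ideal.mul_mem_left _ _ (minor_mem_minorsIdeal a b p q)

lemma Jac_mul_sup_le (u h : On n) :
    Jac n (u * h) ⊔ Ideal.span {u * h} ≤ Jac n h ⊔ Ideal.span {h} := by
  refine sup_le (Ideal.span_le.2 (Set.range_subset_iff.2 fun i => ?_))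
    ((Ideal.span_singleton_le_span_singleton.2 (Dvd.intro_left u rfl)).trans le_sup_right)
  rw [pd_mul]
  exact Submodule.add_mem_sup (Ideal.mul_mem_left _ _ (Ideal.subset_span ⟨i, rfl⟩))
    (Ideal.mul_mem_right _ _ (Ideal.mem_span_singleton_self h))

lemma Jmin_eq_minorsIdeal (f h : On n) :
    Jmin n f h = minorsIdeal (fun i => pd i f) fun i => pd i h := rfl

lemma Jmin_mul_sup_le (f u h : On n) :
    Jmin n f (u * h) ⊔ Ideal.span {u * h} ≤ Jmin n f h ⊔ Ideal.span {h} := by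
  rw [Jmin_eq_minorsIdeal, Jmin_eq_minorsIdeal]
  refine sup_le (minorsIdeal_le_iff.2 fun j k => ?_)
    ((Ideal.span_singleton_le_span_singleton.2 (Dvd.intro_left u rfl)).trans le_sup_right)
  have hsplit : pd j f * pd k (u * h) - pd k f * pd j (u * h) =
      u * (pd j f * pd k h - pd k f * pd j h) + h * (pd j f * pd k u - pd k f * pd j u) := by
    rw [pd_mul, pd_mul]
    ring
  rw [hsplit]
  exact Submodule.add_mem_sup (Ideal.mul_mem_left _ _ (minor_mem_minorsIdeal _ _ j k))
    (Ideal.mul_mem_right _ _ (Ideal.mem_span_singleton_self h))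

variable {Y : Fin n → On n} {w : Fin n → ℂ} {f g h α : On n} {F G : MvPolynomial (Fin n) ℂ}
  {δ : Fin n → On n} {k N : ℕ} {μ : ℂ}

lemma pd_sub_mulVec_mem (hf : f - MvPolynomial.aeval Y F ∈ mId n ^ (k + 1)) (i : Fin n) :
    pd i f - (Matrix.of fun i j => pd i (Y j)).mulVec
      (fun j => MvPolynomial.aeval Y (pderiv j F)) i ∈ mId n ^ k := by
  rw [← congr_fun (pd_aeval Y F) i, ← pd_sub]
  exact derivation_mem_pow (pdDerivation i) hf

lemma Jac_le_map_sup (hf : f - MvPolynomial.aeval Y F ∈ mId n ^ (k + 1)) :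
    Jac n f ≤ (Ideal.span (Set.range fun j => pderiv j F)).map (MvPolynomial.aeval Y (R := ℂ)) ⊔
      mId n ^ k := by
  refine Ideal.span_le.2 (Set.range_subset_iff.2 fun i => ?_)
  rw [← add_sub_cancel _ (pd i f)]
  exact Submodule.add_mem_sup (sum_mem fun j _ => Ideal.mul_mem_left _ _
    (Ideal.mem_map_of_mem _ (Ideal.subset_span ⟨j, rfl⟩))) (pd_sub_mulVec_mem hf i)

lemma Jmin_le_map_sup (hf : f - MvPolynomial.aeval Y F ∈ mId n ^ (k + 1))
    (hg : g - MvPolynomial.aeval Y G ∈ mId n ^ (k + 1)) :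
    Jmin n f g ≤ (minorsIdeal (fun j => pderiv j F) fun j => pderiv j G).map
      (MvPolynomial.aeval Y (R := ℂ)) ⊔ mId n ^ k := by
  rw [Jmin_eq_minorsIdeal]
  refine (minorsIdeal_le_sup (pd_sub_mulVec_mem hf) (pd_sub_mulVec_mem hg)).trans
    (sup_le_sup_right ?_ _)
  exact (minorsIdeal_mulVec_le _ _ _).trans
    (map_minorsIdeal (MvPolynomial.aeval Y (R := ℂ)).toRingHom _ _).ge

lemma span_singleton_le_map_sup (hf : f - MvPolynomial.aeval Y F ∈ mId n ^ (k + 1)) :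
    Ideal.span {f} ≤ (Ideal.span {F}).map (MvPolynomial.aeval Y (R := ℂ)) ⊔ mId n ^ k := by
  rw [Ideal.span_singleton_le_iff_mem, ← add_sub_cancel (MvPolynomial.aeval Y F) f]
  exact Submodule.add_mem_sup (Ideal.mem_map_of_mem _ (Ideal.mem_span_singleton_self F))
    (Ideal.pow_le_pow_right k.le_succ hf)

lemma isWeightedHomogeneous_re (hF : IsWeightedHomogeneous w F μ) :
    IsWeightedHomogeneous (fun i => (w i).re) F μ.re := fun m hm => by
  rw [← hF hm]
  simp [Finsupp.weight_apply, Finsupp.sum]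

lemma exists_isWeightedHomogeneous_sub_mem (hY : IsCoordSystem Y) {hδ : ∀ i, δ i ∈ mId n}
    (hw : ∀ i, Ideal.Quotient.mk (mId n ^ k) (Y i) ∈
      maxGenEigenspace (truncDerivation hδ k).toLinearMap (w i))
    (hg : Ideal.Quotient.mk (mId n ^ k) g ∈
      maxGenEigenspace (truncDerivation hδ k).toLinearMap μ) :
    ∃ G : MvPolynomial (Fin n) ℂ, IsWeightedHomogeneous (fun i => (w i).re) G μ.re ∧
      g - MvPolynomial.aeval Y G ∈ mId n ^ k := by
  obtain ⟨P, hP⟩ := hY.exists_aeval_sub_mem_pow k g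
  exact ⟨_, isWeightedHomogeneous_re
    (MvPolynomial.weightedHomogeneousComponent_isWeightedHomogeneous μ P),
    sub_aeval_weightedHomogeneousComponent_mem hw hg hP⟩

lemma IsCoordSystem.mem_idealOfVars_sq (hY : IsCoordSystem Y) (hf2 : f ∈ mId n ^ 2)
    (hfF : f - MvPolynomial.aeval Y F ∈ mId n ^ (k + 2)) : F ∈ idealOfVars (Fin n) ℂ ^ 2 := by
  rw [← hY.aeval_mem_pow_iff, ← sub_sub_cancel f (MvPolynomial.aeval Y F)]
  exact sub_mem hf2 (Ideal.pow_le_pow_right (Nat.le_add_left 2 k) hfF)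

lemma mk_mem_maxGenEigenspace_one (hδ : ∀ i, δ i ∈ mId n) (hδf : applyVF δ f = f) (k : ℕ) :
    Ideal.Quotient.mk (mId n ^ k) f ∈ maxGenEigenspace (truncDerivation hδ k).toLinearMap 1 := by
  refine Module.End.eigenspace_le_maxGenEigenspace (Module.End.mem_eigenspace_iff.2 ?_)
  rw [one_smul]
  exact (truncDerivation_mk hδ k f).trans (congr_arg _ hδf)

lemma span_pderiv_le_idealOfVars (hF : F ∈ idealOfVars (Fin n) ℂ ^ 2) :
    Ideal.span (Set.range fun j => pderiv j F) ≤ idealOfVars (Fin n) ℂ :=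
  Ideal.span_le.2 (Set.range_subset_iff.2 (pderiv_mem_idealOfVars hF))

lemma span_singleton_le_idealOfVars (hF : F ∈ idealOfVars (Fin n) ℂ ^ 2) :
    Ideal.span {F} ≤ idealOfVars (Fin n) ℂ :=
  (Ideal.span_singleton_le_iff_mem _).2 (Ideal.pow_le_self two_ne_zero hF)

lemma IsCoordSystem.idealOfVars_mem_minimalPrimes_span_pderiv (hY : IsCoordSystem Y)
    (hf2 : f ∈ mId n ^ 2) (hf : mId n ^ N ≤ Jac n f)
    (hfF : f - MvPolynomial.aeval Y F ∈ mId n ^ (N + 2)) :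
    idealOfVars (Fin n) ℂ ∈ (Ideal.span (Set.range fun j => pderiv j F)).minimalPrimes :=
  hY.idealOfVars_mem_minimalPrimes (span_pderiv_le_idealOfVars (hY.mem_idealOfVars_sq hf2 hfF))
    (hf.trans (Jac_le_map_sup hfF))

lemma IsCoordSystem.idealOfVars_mem_minimalPrimes_span_pderiv_sup (hY : IsCoordSystem Y)
    (hg2 : g ∈ mId n ^ 2) (hg : mId n ^ N ≤ Jac n g ⊔ Ideal.span {g})
    (hgG : g - MvPolynomial.aeval Y G ∈ mId n ^ (N + 2)) : idealOfVars (Fin n) ℂ ∈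
      (Ideal.span (Set.range fun j => pderiv j G) ⊔ Ideal.span {G}).minimalPrimes := by
  have hG2 := hY.mem_idealOfVars_sq hg2 hgG
  refine hY.idealOfVars_mem_minimalPrimes (sup_le (span_pderiv_le_idealOfVars hG2)
    (span_singleton_le_idealOfVars hG2)) (hg.trans ?_)
  rw [Ideal.map_sup, sup_sup_distrib_right]
  exact sup_le_sup (Jac_le_map_sup hgG) (span_singleton_le_map_sup hgG)

lemma IsCoordSystem.idealOfVars_mem_minimalPrimes_minorsIdeal_sup (hY : IsCoordSystem Y)
    (hf2 : f ∈ mId n ^ 2) (hg2 : g ∈ mId n ^ 2) (hfg : mId n ^ N ≤ Jmin n f g ⊔ Ideal.span {g})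
    (hfF : f - MvPolynomial.aeval Y F ∈ mId n ^ (N + 2))
    (hgG : g - MvPolynomial.aeval Y G ∈ mId n ^ (N + 2)) : idealOfVars (Fin n) ℂ ∈
      (minorsIdeal (fun j => pderiv j F) (fun j => pderiv j G) ⊔ Ideal.span {G}).minimalPrimes := by
  have hF := pderiv_mem_idealOfVars (hY.mem_idealOfVars_sq hf2 hfF)
  refine hY.idealOfVars_mem_minimalPrimes (sup_le (minorsIdeal_le_iff.2 fun j k =>
    sub_mem (Ideal.mul_mem_right _ _ (hF j)) (Ideal.mul_mem_right _ _ (hF k)))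
    (span_singleton_le_idealOfVars (hY.mem_idealOfVars_sq hg2 hgG))) (hfg.trans ?_)
  rw [Ideal.map_sup, sup_sup_distrib_right]
  exact sup_le_sup (Jmin_le_map_sup hfF hgG) (span_singleton_le_map_sup hgG)

lemma one_lt_of_isRoot_charpoly_of_re_nonpos (hδ : ∀ i, δ i ∈ mId n) (hf2 : f ∈ mId n ^ 2)
    (hδf : applyVF δ f = f) (hf : mId n ^ N ≤ Jac n f ⊔ Ideal.span {f})
    (hμ : (linPart δ).charpoly.IsRoot μ) (hneg : μ.re ≤ 0) : 1 < n := by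
  obtain ⟨Y, w, hY, hYw, hw⟩ := exists_isCoordSystem_mem_maxGenEigenspace hδ N
  obtain ⟨F, hFw, hfF⟩ := exists_isWeightedHomogeneous_sub_mem hY hYw
    (mk_mem_maxGenEigenspace_one hδ hδf _)
  obtain ⟨i, rfl⟩ := hw μ hμ
  have hcard := card_nonpos_eq_card_ge hFw (by simp) (hY.mem_idealOfVars_sq hf2 hfF)
    (hY.idealOfVars_mem_minimalPrimes_span_pderiv_sup hf2 hf hfF)
  obtain ⟨j, hj⟩ : ∃ j, j ∈ Finset.filter (fun j => (1 : ℂ).re ≤ (w j).re) Finset.univ :=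
    Finset.card_pos.1 (hcard ▸ Finset.card_pos.2 ⟨i, by simpa using hneg⟩)
  have hij : i ≠ j := by
    rintro rfl
    exact absurd (hneg.trans_lt one_pos) (by simpa using hj)
  by_contra! hn
  exact hij ((Fin.subsingleton_iff_le_one.2 hn).elim i j)

theorem re_pos_of_isRoot_charpoly (hδ : ∀ i, δ i ∈ mId n) (hf2 : f ∈ mId n ^ 2)
    (hδf : applyVF δ f = f) (hf : mId n ^ N ≤ Jac n f) (hh2 : h ∈ mId n ^ 2)
    (hδh : applyVF δ h = α * h) (hh : mId n ^ N ≤ Jac n h ⊔ Ideal.span {h})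
    (hfh : mId n ^ N ≤ Jmin n f h ⊔ Ideal.span {h}) (hμ : (linPart δ).charpoly.IsRoot μ) :
    0 < μ.re := by
  obtain ⟨Y, w, hY, hYw, hw⟩ := exists_isCoordSystem_mem_maxGenEigenspace hδ N
  obtain ⟨F, hFw, hfF⟩ := exists_isWeightedHomogeneous_sub_mem hY hYw
    (mk_mem_maxGenEigenspace_one hδ hδf _)
  obtain ⟨u, hu, huh⟩ := exists_isUnit_mul_mk_mem_maxGenEigenspace hδ hδh (N + 1)
  obtain ⟨G, hGw, hhG⟩ := exists_isWeightedHomogeneous_sub_mem hY hYw huh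
  obtain ⟨i, rfl⟩ := hw μ hμ
  obtain ⟨v, hv⟩ := hu.exists_left_inv
  have hvu : v * (u * h) = h := by rw [← mul_assoc, hv, one_mul]
  have huh2 : u * h ∈ mId n ^ 2 := Ideal.mul_mem_left _ u hh2
  rw [← hvu] at hh hfh
  exact weight_pos_of_isWeightedHomogeneous hFw (by simp) hGw
    (hY.mem_idealOfVars_sq hf2 hfF) (hY.mem_idealOfVars_sq huh2 hhG)
    (hY.idealOfVars_mem_minimalPrimes_span_pderiv hf2 hf hfF)
    (hY.idealOfVars_mem_minimalPrimes_span_pderiv_sup huh2 (hh.trans (Jac_mul_sup_le _ _)) hhG)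
    (hY.idealOfVars_mem_minimalPrimes_minorsIdeal_sup hf2 huh2
      (hfh.trans (Jmin_mul_sup_le _ _ _)) hfF hhG) i

end WeightedApproximation

section CompositionOperator

open ContinuousMap

variable {𝕜 S E F : Type*} [NontriviallyNormedField 𝕜] [TopologicalSpace S] [CompactSpace S]
  [NormedAddCommGroup E] [NormedSpace 𝕜 E] [NormedAddCommGroup F] [NormedSpace 𝕜 F]

variable (S) in
/-- The multilinear map that a multilinear map `m` induces on spaces of continuous functions,
acting pointwise. It turns the power series of a function `H` into that of `f ↦ H ∘ f`. -/
def pointwiseMultilinear {ι : Type*} [Fintype ι]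
    (m : ContinuousMultilinearMap 𝕜 (fun _ : ι => E) F) :
    ContinuousMultilinearMap 𝕜 (fun _ : ι => C(S, E)) C(S, F) :=
  MultilinearMap.mkContinuous
    { toFun := fun f =>
        ⟨fun s => m fun i => f i s, m.cont.comp (continuous_pi fun i => (f i).continuous)⟩
      map_update_add' := fun f i x y => by
        ext s
        have happly (z : C(S, E)) := Function.apply_update (fun _ (g : C(S, E)) => g s) f i z
        simp only [ContinuousMap.coe_mk, ContinuousMap.add_apply, happly, m.map_update_add]
      map_update_smul' := fun f i c x => by
        ext s
        have happly (z : C(S, E)) := Function.apply_update (fun _ (g : C(S, E)) => g s) f i z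
        simp only [ContinuousMap.coe_mk, ContinuousMap.smul_apply, happly, m.map_update_smul] }
    ‖m‖ fun f => (ContinuousMap.norm_le _ (by positivity)).2 fun s =>
      (m.le_opNorm _).trans (by gcongr with i; exact (f i).norm_coe_le_norm s)

lemma norm_pointwiseMultilinear_le {ι : Type*} [Fintype ι]
    (m : ContinuousMultilinearMap 𝕜 (fun _ : ι => E) F) : ‖pointwiseMultilinear S m‖ ≤ ‖m‖ :=
  MultilinearMap.mkContinuous_norm_le _ (norm_nonneg _) _

lemma exists_analyticOnNhd_comp [CompleteSpace F] {H : E → F} {p : FormalMultilinearSeries 𝕜 E F}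
    {R : ENNReal} (hp : HasFPowerSeriesOnBall H p 0 R) : ∃ Φ : C(S, E) → C(S, F),
      AnalyticOnNhd 𝕜 Φ (Metric.eball 0 R) ∧ ∀ f ∈ Metric.eball 0 R, ∀ s, Φ f s = H (f s) := by
  let P : FormalMultilinearSeries 𝕜 C(S, E) C(S, F) := fun k => pointwiseMultilinear S (p k)
  have hR : R ≤ P.radius := hp.r_le.trans
    (FormalMultilinearSeries.radius_le_of_le fun k => norm_pointwiseMultilinear_le (p k))
  have hP : HasFPowerSeriesOnBall P.sum P 0 R :=
    (P.hasFPowerSeriesOnBall (hp.r_pos.trans_le hR)).mono hp.r_pos hR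
  refine ⟨P.sum, hP.analyticOnNhd, fun f hf s => ?_⟩
  have hfs : f s ∈ Metric.eball (0 : E) R := by
    rw [Metric.mem_eball, edist_zero_right] at hf ⊢
    exact (enorm_le_iff_norm_le.2 (f.norm_coe_le_norm s)).trans_lt hf
  have hsum := (evalCLM 𝕜 s).hasSum (hP.hasSum hf)
  rw [zero_add] at hsum
  exact hsum.unique (zero_add (f s) ▸ hp.hasSum hfs)

lemma exists_analyticAt_translate [CompleteSpace F] {H : E → F} {p : FormalMultilinearSeries 𝕜 E F}
    {R : ENNReal} (hp : HasFPowerSeriesOnBall H p 0 R) {ι : C(S, E)}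
    (hι : ι ∈ Metric.eball 0 R) : ∃ Φ : E → C(S, F),
      AnalyticAt 𝕜 Φ 0 ∧ ∀ᶠ z in 𝓝 0, ∀ s, Φ z s = H (z + ι s) := by
  obtain ⟨Φ, hΦ, hΦ_apply⟩ := exists_analyticOnNhd_comp (S := S) hp
  let A : E → C(S, E) := fun z => ContinuousLinearMap.const 𝕜 S z + ι
  have hA : AnalyticAt 𝕜 A 0 := (ContinuousLinearMap.analyticAt _ 0).add analyticAt_const
  have hA0 : A 0 ∈ Metric.eball 0 R := by simpa [A] using hι
  refine ⟨Φ ∘ A, (hΦ _ hA0).comp hA, ?_⟩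
  filter_upwards [hA.continuousAt.eventually_mem (Metric.isOpen_eball.mem_nhds hA0)] with z hz
  exact hΦ_apply _ hz

end CompositionOperator

section CircleAverage

open Metric
open Real (circleAverage circleAverage_def)

/-- `Real.circleAverage` as a continuous linear functional on the continuous functions on the
circle. -/
def circleAverageCLM {r : ℝ} (hr : 0 ≤ r) : C(sphere (0 : ℂ) r, ℂ) →L[ℂ] ℂ :=
  let e : C(ℝ, sphere (0 : ℂ) r) := ⟨fun θ => ⟨circleMap 0 r θ, circleMap_mem_sphere 0 hr θ⟩,
    (continuous_circleMap 0 r).subtype_mk _⟩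
  LinearMap.mkContinuous
    { toFun := fun f => (2 * Real.pi)⁻¹ • ∫ θ in (0 : ℝ)..2 * Real.pi, f (e θ)
      map_add' := fun f g => (congrArg _ (intervalIntegral.integral_add
        ((f.comp e).continuous.intervalIntegrable ..)
        ((g.comp e).continuous.intervalIntegrable ..))).trans (smul_add ..)
      map_smul' := fun c f => by
        simp only [RingHom.id_apply, ContinuousMap.smul_apply, intervalIntegral.integral_smul]
        rw [smul_comm] } 1 fun f => by
    have hbound := intervalIntegral.norm_integral_le_of_norm_le_const (a := 0) (b := 2 * Real.pi)
      fun θ _ => f.norm_coe_le_norm (e θ)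
    rw [sub_zero, abs_of_pos Real.two_pi_pos] at hbound
    simpa only [LinearMap.coe_mk, AddHom.coe_mk, norm_smul, norm_inv, one_mul,
      Real.norm_of_nonneg Real.two_pi_pos.le] using (inv_mul_le_iff₀' Real.two_pi_pos).2 hbound

lemma circleAverageCLM_eq {r : ℝ} (hr : 0 ≤ r) {f : C(sphere (0 : ℂ) r, ℂ)} {g : ℂ → ℂ}
    (hfg : ∀ s, f s = g s) : circleAverageCLM hr f = circleAverage g 0 r := by
  rw [circleAverage_def]
  exact congrArg ((2 * Real.pi)⁻¹ • ·) (intervalIntegral.integral_congr fun θ _ => hfg _)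

lemma analyticAt_circleAverage_div {E : Type*} [NormedAddCommGroup E] [NormedSpace ℂ E]
    {G H : E → ℂ} {p q : FormalMultilinearSeries ℂ E ℂ} {R : ENNReal}
    (hp : HasFPowerSeriesOnBall G p 0 R) (hq : HasFPowerSeriesOnBall H q 0 R) {v : E} {r : ℝ}
    (hr : 0 ≤ r) (hv : (r : ℂ) • v ∈ eball 0 R)
    (hH : ∀ ζ ∈ sphere (0 : ℂ) r, H (ζ • v) ≠ 0) :
    AnalyticAt ℂ (fun z => circleAverage (fun ζ => G (z + ζ • v) / H (z + ζ • v)) 0 r) 0 := by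
  have : CompactSpace (sphere (0 : ℂ) r) := isCompact_iff_compactSpace.1 (isCompact_sphere _ _)
  let ι : C(sphere (0 : ℂ) r, E) := ⟨fun s => (s : ℂ) • v, by fun_prop⟩
  have hι : ι ∈ eball 0 R := by
    rw [mem_eball, edist_zero_right] at hv ⊢
    refine (enorm_le_iff_norm_le.2
      ((ContinuousMap.norm_le _ (norm_nonneg _)).2 fun s => ?_)).trans_lt hv
    simp [ι, norm_smul, mem_sphere_zero_iff_norm.1 s.2, abs_of_nonneg hr]
  obtain ⟨ΦG, hΦG, hΦG_apply⟩ := exists_analyticAt_translate hp hι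
  obtain ⟨ΦH, hΦH, hΦH_apply⟩ := exists_analyticAt_translate hq hι
  have hunit : IsUnit (ΦH 0) := ContinuousMap.isUnit_iff_forall_ne_zero _ |>.2 fun s => by
    rw [hΦH_apply.self_of_nhds, zero_add]
    exact hH s s.2
  have hinv : AnalyticAt ℂ (Ring.inverse ∘ ΦH) 0 :=
    (hunit.unit_spec ▸ analyticAt_inverse hunit.unit).comp hΦH
  refine (((circleAverageCLM hr).analyticAt _).comp (hΦG.mul hinv)).congr ?_
  filter_upwards [hΦG_apply, hΦH_apply, hΦH.continuousAt.eventually_mem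
    (Units.isOpen.mem_nhds hunit)] with z hzG hzH hz
  refine circleAverageCLM_eq hr fun s => ?_
  have hmul : ΦH z s * Ring.inverse (ΦH z) s = 1 :=
    DFunLike.congr_fun (Ring.mul_inverse_cancel _ hz) s
  rw [hzH] at hmul
  change ΦG z s * Ring.inverse (ΦH z) s = _
  rw [hzG, eq_inv_of_mul_eq_one_right hmul]
  rfl

end CircleAverage

section Division

open Metric Asymptotics
open Real (circleAverage circleAverage_congr_sphere)

lemma differentiableAt_limUnder_div {u w : ℂ → ℂ} {ζ : ℂ} (hu : AnalyticAt ℂ u ζ)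
    (hw : AnalyticAt ℂ w ζ) (hw0 : ∀ᶠ ξ in 𝓝[≠] ζ, w ξ ≠ 0) (huw : u =O[𝓝 ζ] w) :
    DifferentiableAt ℂ (fun ξ => limUnder (𝓝[≠] ξ) fun η => u η / w η) ζ := by
  obtain ⟨C, hC⟩ := huw.bound
  obtain ⟨s, hs, hso, hζs⟩ := _root_.eventually_nhds_iff.1 (hu.eventually_analyticAt.and
    (hw.eventually_analyticAt.and (hC.and (eventually_nhdsWithin_iff.1 hw0))))
  have hdiff : ∀ ξ ∈ s \ {ζ}, DifferentiableAt ℂ (fun η => u η / w η) ξ := fun ξ ⟨hξ, hne⟩ =>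
    (hs ξ hξ).1.differentiableAt.fun_div (hs ξ hξ).2.1.differentiableAt ((hs ξ hξ).2.2.2 hne)
  have hsn : s ∈ 𝓝 ζ := hso.mem_nhds hζs
  refine ((Complex.differentiableOn_update_limUnder_of_bddAbove hsn
    (fun ξ hξ => (hdiff ξ hξ).differentiableWithinAt) ⟨C, ?_⟩).differentiableAt
      hsn).congr_of_eventuallyEq ?_
  · rintro _ ⟨ξ, ⟨hξ, hne⟩, rfl⟩
    rw [Function.comp_apply, norm_div, div_le_iff₀ (norm_pos_iff.2 ((hs ξ hξ).2.2.2 hne))]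
    exact (hs ξ hξ).2.2.1
  · filter_upwards [hsn] with ξ hξ
    rcases eq_or_ne ξ ζ with rfl | hne
    · rw [Function.update_self]
    · rw [Function.update_of_ne hne]
      exact ((hdiff ξ ⟨hξ, hne⟩).continuousAt.tendsto.mono_left nhdsWithin_le_nhds).limUnder_eq

lemma circleAverage_div_mul_eq {u w : ℂ → ℂ} {c : ℂ} {r : ℝ} (hr : 0 < r)
    (hu : AnalyticOnNhd ℂ u (closedBall c r)) (hw : AnalyticOnNhd ℂ w (closedBall c r))
    (hw0 : ∀ ζ ∈ sphere c r, w ζ ≠ 0) (huw : ∀ ζ ∈ closedBall c r, u =O[𝓝 ζ] w) :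
    circleAverage (fun ζ => u ζ / w ζ) c r * w c = u c := by
  have hc : c ∈ closedBall c r := mem_closedBall_self hr.le
  by_cases hwc : w c = 0
  · rw [hwc, mul_zero, (huw c hc).eq_zero_imp.self_of_nhds hwc]
  let k : ℂ → ℂ := fun ζ => limUnder (𝓝[≠] ζ) fun η => u η / w η
  have hk_eq : ∀ ζ ∈ closedBall c r, w ζ ≠ 0 → u ζ / w ζ = k ζ := fun ζ hζ hne =>
    (((hu ζ hζ).continuousAt.div (hw ζ hζ).continuousAt hne).tendsto.mono_left
      nhdsWithin_le_nhds).limUnder_eq.symm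
  have hk : DifferentiableOn ℂ k (closedBall c r) := fun ζ hζ => by
    refine (differentiableAt_limUnder_div (hu ζ hζ) (hw ζ hζ) ?_ (huw ζ hζ)).differentiableWithinAt
    refine (hw ζ hζ).eventually_eq_zero_or_eventually_ne_zero.resolve_left fun hzero => hwc ?_
    exact hw.eqOn_zero_of_preconnected_of_eventuallyEq_zero
      (convex_closedBall c r).isPreconnected hζ hzero hc
  have hmean : circleAverage k c r = k c := DiffContOnCl.circleAverage <|
    DifferentiableOn.diffContOnCl <| by rwa [abs_of_pos hr, closure_ball _ hr.ne']
  rw [circleAverage_congr_sphere (f₂ := k) fun ζ hζ => ?_, hmean, ← hk_eq c hc hwc,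
    div_mul_cancel₀ _ hwc]
  rw [abs_of_pos hr] at hζ
  exact hk_eq ζ (sphere_subset_closedBall hζ) (hw0 ζ hζ)

section MetricRegularity

variable {𝕜 E F G : Type*} [NontriviallyNormedField 𝕜] [NormedAddCommGroup E] [NormedSpace 𝕜 E]
  [CompleteSpace E] [NormedAddCommGroup F] [NormedSpace 𝕜 F] [CompleteSpace F]
  [NormedAddCommGroup G] [NormedSpace 𝕜 G] {f : E → F} {f' : E →L[𝕜] F} {x : E}

lemma exists_tendsto_zero_isBigO_sub (hf : HasStrictFDerivAt f f' x) (hf' : f'.range = ⊤)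
    (hx : f x = 0) : ∃ z : E → E, Tendsto z (𝓝 x) (𝓝 x) ∧ (∀ᶠ y in 𝓝 x, f (z y) = 0) ∧
      (fun y => y - z y) =O[𝓝 x] f := by
  let inv := f'.nonlinearRightInverseOfSurjective hf'
  have hinv : 0 < inv.nnnorm := f'.nonlinearRightInverseOfSurjective_nnnorm_pos hf'
  obtain ⟨c, hc, hcinv⟩ := exists_between (inv_pos.2 hinv)
  obtain ⟨s, hs, hfs⟩ := hf.approximates_deriv_on_nhds (Or.inr hc)
  obtain ⟨ε, hε, hball⟩ := Metric.nhds_basis_closedBall.mem_iff.1 hs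
  set a : ℝ := (inv.nnnorm : ℝ)⁻¹ - c
  have ha : 0 < a := sub_pos.2 (by exact_mod_cast hcinv)
  have hsmall : Tendsto (fun y => ‖f y‖ / a + dist y x) (𝓝 x) (𝓝 0) := by
    have hcont : ContinuousAt (fun y => ‖f y‖ / a + dist y x) x :=
      (hf.continuousAt.norm.div_const a).add (continuousAt_id.dist continuousAt_const)
    simpa [hx] using hcont.tendsto
  have hzero : ∀ᶠ y in 𝓝 x, ∃ z, f z = 0 ∧ ‖y - z‖ ≤ ‖f y‖ / a := by
    filter_upwards [hsmall.eventually_le_const hε] with y hy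
    obtain ⟨z, hz, hfz⟩ := hfs.surjOn_closedBall_of_nonlinearRightInverse inv (by positivity)
      ((closedBall_subset_closedBall' hy).trans hball)
      (show 0 ∈ closedBall (f y) (a * (‖f y‖ / a)) by simp [mul_div_cancel₀ _ ha.ne'])
    exact ⟨z, hfz, by rwa [norm_sub_rev, ← mem_closedBall_iff_norm]⟩
  obtain ⟨z, hz⟩ := hzero.choice
  have hbig : (fun y => y - z y) =O[𝓝 x] f := IsBigO.of_bound a⁻¹ <| hz.mono fun y hy => by
    rw [inv_mul_eq_div]
    exact hy.2
  refine ⟨z, ?_, hz.mono fun y hy => hy.1, hbig⟩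
  have hsub := hbig.trans_tendsto (hx ▸ hf.continuousAt.tendsto)
  simpa using tendsto_id.sub hsub

lemma isBigO_of_eventually_eq_zero_imp {g : E → G} {g' : E →L[𝕜] G}
    (hf : HasStrictFDerivAt f f' x) (hf' : f'.range = ⊤) (hg : HasStrictFDerivAt g g' x)
    (h : ∀ᶠ y in 𝓝 x, f y = 0 → g y = 0) : g =O[𝓝 x] f := by
  by_cases hx : f x = 0
  · obtain ⟨z, hzx, hfz, hz⟩ := exists_tendsto_zero_isBigO_sub hf hf' hx
    have hg_sub := hg.isBigO_sub.comp_tendsto (tendsto_id.prodMk_nhds hzx)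
    refine (hg_sub.trans hz).congr' ?_ .rfl
    filter_upwards [hzx.eventually h, hfz] with y hgy hfy
    simp [hgy hfy]
  · exact (isBigO_const_of_tendsto hg.continuousAt.tendsto hx).trans
      ((isEquivalent_const_iff_tendsto hx).2 hf.continuousAt.tendsto).symm.isBigO

end MetricRegularity

lemma eventuallyEq_of_dense {X Y : Type*} [TopologicalSpace X] [TopologicalSpace Y] [T2Space Y]
    {s : Set X} {x : X} {f g : X → Y} (hs : Dense s) (hf : ∀ᶠ y in 𝓝 x, ContinuousAt f y)
    (hg : ∀ᶠ y in 𝓝 x, ContinuousAt g y) (h : ∀ᶠ y in 𝓝 x, y ∈ s → f y = g y) :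
    f =ᶠ[𝓝 x] g := by
  filter_upwards [hf, hg, h.eventually_nhds] with y hfy hgy hy
  have : (𝓝[s] y).NeBot := mem_closure_iff_nhdsWithin_neBot.1 (hs y)
  refine tendsto_nhds_unique ((hfy.mono_left nhdsWithin_le_nhds).congr' ?_)
    (hgy.mono_left (nhdsWithin_le_nhds (s := s)))
  exact eventually_nhdsWithin_iff.2 hy

lemma exists_eventually_smul_ne_zero {E F : Type*} [NormedAddCommGroup E] [NormedSpace ℂ E]
    [NormedAddCommGroup F] [NormedSpace ℂ F] [CompleteSpace F] {f : E → F}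
    (hf : AnalyticAt ℂ f 0) (hf0 : ∃ᶠ x in 𝓝 0, f x ≠ 0) :
    ∃ v : E, ∀ᶠ ζ : ℂ in 𝓝[≠] 0, f (ζ • v) ≠ 0 := by
  obtain ⟨R, hR, hfR⟩ := hf.exists_ball_analyticOnNhd
  obtain ⟨v, hfv, hv⟩ := (hf0.and_eventually (ball_mem_nhds _ hR)).exists
  let L : ℂ →L[ℂ] E := ContinuousLinearMap.toSpanSingleton ℂ v
  have hL : AnalyticOnNhd ℂ (f ∘ L) (L ⁻¹' ball 0 R) := fun ζ hζ => (hfR _ hζ).comp (L.analyticAt ζ)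
  have hpre : IsPreconnected (L ⁻¹' ball 0 R) :=
    ((convex_ball 0 R).linear_preimage (L.toLinearMap.restrictScalars ℝ)).isPreconnected
  have h0 : (0 : ℂ) ∈ L ⁻¹' ball 0 R := by simpa using hR
  have h1 : (1 : ℂ) ∈ L ⁻¹' ball 0 R := by simpa [L] using hv
  refine ⟨v, (hL 0 h0).eventually_eq_zero_or_eventually_ne_zero.resolve_left fun hzero => hfv ?_⟩
  simpa [L] using hL.eqOn_zero_of_preconnected_of_eventuallyEq_zero hpre h0 hzero h1

lemma dense_compl_span_singleton {𝕜 E : Type*} [NontriviallyNormedField 𝕜] [AddCommGroup E]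
    [TopologicalSpace E] [Module 𝕜 E] [ContinuousAdd E] [ContinuousSMul 𝕜 E]
    (hE : 1 < Module.finrank 𝕜 E) (v : E) : Dense ((𝕜 ∙ v : Submodule 𝕜 E) : Set E)ᶜ := by
  refine interior_eq_empty_iff_dense_compl.1 (Set.not_nonempty_iff_eq_empty.1 fun hint => ?_)
  have hle := finrank_span_le_card (R := 𝕜) ({v} : Set E)
  rw [Submodule.eq_top_of_nonempty_interior' _ hint, finrank_top, Set.toFinset_singleton,
    Finset.card_singleton] at hle
  exact hE.not_ge hle

end Division

section Hartogs

open Metric Asymptotics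
open Real (circleAverage)

variable {E : Type*} [NormedAddCommGroup E] [NormedSpace ℂ E] {G H : E → ℂ} {v : E}

lemma isBigO_of_fderiv_ne_zero [CompleteSpace E] {x : E} (hG : AnalyticAt ℂ G x)
    (hH : AnalyticAt ℂ H x) (hx : fderiv ℂ H x ≠ 0) (hGH : ∀ᶠ y in 𝓝 x, H y = 0 → G y = 0) :
    G =O[𝓝 x] H := by
  refine isBigO_of_eventually_eq_zero_imp hH.hasStrictFDerivAt ?_ hG.hasStrictFDerivAt hGH
  exact LinearMap.range_eq_top.2
    (LinearMap.surjective fun h => hx (ContinuousLinearMap.coe_injective h))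

lemma circleAverage_smul_div_mul_eq {U : Set E} (hG : AnalyticOnNhd ℂ G U)
    (hH : AnalyticOnNhd ℂ H U) (hGH : ∀ x ∈ U, x ≠ 0 → G =O[𝓝 x] H) {z : E}
    (hz : z ∉ (ℂ ∙ v : Submodule ℂ E)) {r : ℝ} (hr : 0 < r)
    (hU : ∀ ζ ∈ closedBall (0 : ℂ) r, z + ζ • v ∈ U)
    (hH0 : ∀ ζ ∈ sphere (0 : ℂ) r, H (z + ζ • v) ≠ 0) :
    circleAverage (fun ζ => G (z + ζ • v) / H (z + ζ • v)) 0 r * H z = G z := by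
  have hline (ζ : ℂ) : AnalyticAt ℂ (fun ζ : ℂ => z + ζ • v) ζ :=
    analyticAt_const.add (analyticAt_id.smul analyticAt_const)
  have hne (ζ : ℂ) : z + ζ • v ≠ 0 := fun h => hz <| Submodule.mem_span_singleton.2
    ⟨-ζ, by rw [neg_smul, eq_neg_of_add_eq_zero_left h]⟩
  simpa using circleAverage_div_mul_eq hr
    (fun ζ hζ => (hG _ (hU ζ hζ)).comp (f := fun ζ : ℂ => z + ζ • v) (hline ζ))
    (fun ζ hζ => (hH _ (hU ζ hζ)).comp (f := fun ζ : ℂ => z + ζ • v) (hline ζ)) hH0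
    (fun ζ hζ => (hGH _ (hU ζ hζ) (hne ζ)).comp_tendsto (hline ζ).continuousAt.tendsto)

lemma exists_sphere_smul_ne_zero {U : Set E} (hU : U ∈ 𝓝 0)
    (hv : ∀ᶠ ζ : ℂ in 𝓝[≠] 0, H (ζ • v) ≠ 0) : ∃ r > 0,
      (∀ ζ ∈ closedBall (0 : ℂ) r, ζ • v ∈ U) ∧ ∀ ζ ∈ sphere (0 : ℂ) r, H (ζ • v) ≠ 0 := by
  have hUv : ∀ᶠ ζ : ℂ in 𝓝 0, ζ • v ∈ U :=
    (continuous_id.smul continuous_const).continuousAt.eventually_mem (by simpa using hU)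
  obtain ⟨r, hr, hball⟩ := nhds_basis_closedBall.eventually_iff.1
    (hUv.and (eventually_nhdsWithin_iff.1 hv))
  exact ⟨r, hr, fun ζ hζ => (hball hζ).1, fun ζ hζ =>
    (hball (sphere_subset_closedBall hζ)).2 (ne_of_mem_sphere hζ hr.ne')⟩

lemma eventually_circleAverage_smul_div_mul_eq {U : Set E} (hUo : IsOpen U)
    (hG : AnalyticOnNhd ℂ G U) (hH : AnalyticOnNhd ℂ H U)
    (hGH : ∀ x ∈ U, x ≠ 0 → G =O[𝓝 x] H) {r : ℝ} (hr : 0 < r)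
    (hU : ∀ ζ ∈ closedBall (0 : ℂ) r, ζ • v ∈ U) (hH0 : ∀ ζ ∈ sphere (0 : ℂ) r, H (ζ • v) ≠ 0) :
    ∀ᶠ z in 𝓝 0, z ∉ (ℂ ∙ v : Submodule ℂ E) →
      circleAverage (fun ζ => G (z + ζ • v) / H (z + ζ • v)) 0 r * H z = G z := by
  have hcont (ζ : ℂ) : ContinuousAt (fun p : E × ℂ => p.1 + p.2 • v) (0, ζ) := by fun_prop
  have hUz : ∀ᶠ z in 𝓝 0, ∀ ζ ∈ closedBall (0 : ℂ) r, z + ζ • v ∈ U :=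
    (isCompact_closedBall _ _).eventually_forall_of_forall_eventually fun ζ hζ =>
      (hcont ζ).eventually_mem (hUo.mem_nhds (by simpa using hU ζ hζ))
  have hHz : ∀ᶠ z in 𝓝 0, ∀ ζ ∈ sphere (0 : ℂ) r, H (z + ζ • v) ≠ 0 :=
    (isCompact_sphere _ _).eventually_forall_of_forall_eventually fun ζ hζ =>
      ((hH _ (hU ζ (sphere_subset_closedBall hζ))).continuousAt.comp_of_eq (hcont ζ)
        (zero_add _)).eventually_ne (by simpa using hH0 ζ hζ)
  filter_upwards [hUz, hHz] with z hzU hzH hzv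
  exact circleAverage_smul_div_mul_eq hG hH hGH hzv hr hzU hzH

/-- Off the line `ℂ ∙ v` the quotient `G / H` is locally bounded on the discs `z + ζ • v`, and
averaging it over their boundary circles gives an analytic function also across the line. -/
lemma exists_analyticAt_mul_eventuallyEq [CompleteSpace E] (hE : 1 < Module.finrank ℂ E)
    (hG : AnalyticAt ℂ G 0) (hH : AnalyticAt ℂ H 0)
    (hcrit : ∀ᶠ x in 𝓝[≠] 0, fderiv ℂ H x ≠ 0) (hGH : ∀ᶠ x in 𝓝 0, H x = 0 → G x = 0) :
    ∃ k : E → ℂ, AnalyticAt ℂ k 0 ∧ G =ᶠ[𝓝 0] fun x => k x * H x := by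
  have : Nontrivial E := Module.nontrivial_of_finrank_pos (R := ℂ) (by omega)
  have : (𝓝[≠] (0 : E)).NeBot := Module.punctured_nhds_neBot ℂ E 0
  have hH0 : ∃ᶠ x in 𝓝 0, H x ≠ 0 := fun hzero => by
    obtain ⟨x, hx, hx0⟩ := (hcrit.and (eventually_nhdsWithin_of_eventually_nhds
      (EventuallyEq.fderiv (𝕜 := ℂ) (hzero.mono fun x => not_not.1 : H =ᶠ[𝓝 0] 0)))).exists
    exact hx (hx0.trans (congrFun fderiv_zero x))
  obtain ⟨v, hv⟩ := exists_eventually_smul_ne_zero hH hH0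
  obtain ⟨p, hp⟩ := id hG
  obtain ⟨q, hq⟩ := id hH
  obtain ⟨R, ⟨hpR, hqR⟩, hR⟩ :=
    ((hp.eventually.and hq.eventually).and self_mem_nhdsWithin).exists
  have hbig : ∀ᶠ x in 𝓝 0, x ≠ 0 → G =O[𝓝 x] H := by
    filter_upwards [hG.eventually_analyticAt, hH.eventually_analyticAt,
      eventually_nhdsWithin_iff.1 hcrit, hGH.eventually_nhds] with x hGx hHx hx hGHx hx0
    exact isBigO_of_fderiv_ne_zero hGx hHx (hx hx0) hGHx
  obtain ⟨U, hU, hUo, h0U⟩ := _root_.eventually_nhds_iff.1 (hG.eventually_analyticAt.and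
    (hH.eventually_analyticAt.and (hbig.and (eball_mem_nhds 0 hR))))
  obtain ⟨r, hr, hrU, hHr⟩ := exists_sphere_smul_ne_zero (hUo.mem_nhds h0U) hv
  have hrv : (r : ℂ) • v ∈ eball 0 R := (hU _ (hrU r (by simp [abs_of_pos hr]))).2.2.2
  have hk := analyticAt_circleAverage_div hpR hqR hr.le hrv hHr
  refine ⟨_, hk, .symm <| eventuallyEq_of_dense (dense_compl_span_singleton hE v)
    ((hk.mul hH).eventually_continuousAt) hG.eventually_continuousAt ?_⟩
  exact eventually_circleAverage_smul_div_mul_eq hUo (fun x hx => (hU x hx).1)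
    (fun x hx => (hU x hx).2.1) (fun x hx => (hU x hx).2.2.1) hr hrU hHr

lemma Jac_mkOn_le_IX {H : (Fin n → ℂ) → ℂ} (hH : AnalyticAt ℂ H 0) :
    Jac n (mkOn H hH) ≤ IX n {x | fderiv ℂ H x = 0} := by
  rw [Jac, Ideal.span_le, Set.range_subset_iff]
  intro i
  rw [SetLike.mem_coe, pd_mkOn, mkOn_mem_IX]
  exact .of_forall fun x hx => by rw [show fderiv ℂ H x = 0 from hx, zero_apply]

lemma eventually_eq_zero_of_pow_le_IX {X : Set (Fin n → ℂ)} {N : ℕ} (h : mId n ^ N ≤ IX n X) :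
    ∀ᶠ x in 𝓝 0, x ∈ X → x = 0 := by
  have hcoord (i : Fin n) : ∀ᶠ x in 𝓝 0, x ∈ X → x i ^ N = 0 := by
    refine (mkOn_mem_IX ((analyticAt_coord i).pow N)).1 (h ?_)
    exact Ideal.pow_mem_pow (mem_mId.2 (ev0_coordG i)) N
  filter_upwards [eventually_all.2 hcoord] with x hx hxX
  exact funext fun i => eq_zero_of_pow_eq_zero (hx i hxX)

lemma IX_preimage_zero_eq_span (hn : 1 < n) {H : (Fin n → ℂ) → ℂ} {hH : AnalyticAt ℂ H 0} {N : ℕ}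
    (hN : mId n ^ N ≤ Jac n (mkOn H hH)) : IX n (H ⁻¹' {0}) = Ideal.span {mkOn H hH} := by
  refine le_antisymm (fun g hg => ?_) ((Ideal.span_singleton_le_iff_mem _).2
    ((mkOn_mem_IX hH).2 (.of_forall fun _ hx => hx)))
  obtain ⟨G, hG, rfl⟩ := exists_mkOn g
  have hcrit : ∀ᶠ x in 𝓝[≠] 0, fderiv ℂ H x ≠ 0 := eventually_nhdsWithin_iff.2 <|
    (eventually_eq_zero_of_pow_le_IX (hN.trans (Jac_mkOn_le_IX hH))).mono fun _ => mt
  obtain ⟨k, hk, hGk⟩ := exists_analyticAt_mul_eventuallyEq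
    (by rwa [Module.finrank_fin_fun]) hG hH hcrit ((mkOn_mem_IX hG).1 hg)
  refine Ideal.mem_span_singleton'.2 ⟨mkOn k hk, ?_⟩
  rw [mkOn_mul, mkOn_eq_iff]
  exact hGk.symm

end Hartogs

section BruceRoberts

lemma BRIdeal_le_Jac (X : Set (Fin n → ℂ)) (f : On n) : BRIdeal n X f ≤ Jac n f := by
  rintro _ ⟨η, -, rfl⟩
  exact Ideal.mem_span_range_iff_exists_fun.2 ⟨η, rfl⟩

lemma BRIdeal_mul_Jac_le {X : Set (Fin n → ℂ)} (f : On n) {h : On n}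
    (hX : ∀ η ∈ ThetaX n X, applyVF η h ∈ Ideal.span {h}) :
    BRIdeal n X f * Jac n h ≤ Jmin n f h ⊔ Ideal.span {h} := by
  rw [Ideal.mul_le]
  rintro _ ⟨η, hη, rfl⟩ b hb
  obtain ⟨ξ, rfl⟩ := Ideal.mem_span_range_iff_exists_fun.1 hb
  have hminor := minorsIdeal_mulVec_le (Matrix.of ![η, ξ]) (fun i => pd i f) (fun i => pd i h)
    (minor_mem_minorsIdeal _ _ 0 1)
  rw [← Jmin_eq_minorsIdeal] at hminor
  have hdiff : applyVF η f * applyVF ξ h - applyVF ξ f * applyVF η h ∈ Jmin n f h := hminor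
  rw [← sub_add_cancel (gradMap n f η * _) (applyVF ξ f * applyVF η h)]
  exact add_mem (le_sup_left (a := Jmin n f h) hdiff)
    (le_sup_right (a := Jmin n f h) (Ideal.mul_mem_left _ _ (hX η hη)))

theorem muX_infinite_of_nonpositive_weight_general {f : On n} (hf2 : f ∈ mId n ^ 2)
    {H : (Fin n → ℂ) → ℂ} {hH : AnalyticAt ℂ H 0} (hHsing : mkOn H hH ∈ mId n ^ 2)
    (hHiso : FiniteDimensional ℂ (On n ⧸ Jac n (mkOn H hH)))
    {δ : Fin n → On n} (hδX : δ ∈ ThetaX n (H ⁻¹' {0})) (hδ0 : ∀ i, δ i ∈ mId n)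
    (hδf : applyVF δ f = f) {μ : ℂ} (hμ : (linPart δ).charpoly.IsRoot μ) (hneg : μ.re ≤ 0) :
    ¬ FiniteDimensional ℂ (On n ⧸ BRIdeal n (H ⁻¹' {0}) f) := by
  intro hfin
  obtain ⟨a, ha⟩ := exists_pow_le_of_finiteDimensional mId_le_jacobson_bot hfin
  obtain ⟨b, hb⟩ := exists_pow_le_of_finiteDimensional mId_le_jacobson_bot hHiso
  have hf : mId n ^ a ≤ Jac n f := ha.trans (BRIdeal_le_Jac _ f)
  have hn : 1 < n := one_lt_of_isRoot_charpoly_of_re_nonpos hδ0 hf2 hδf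
    (hf.trans le_sup_left) hμ hneg
  have hdiv : ∀ η ∈ ThetaX n (H ⁻¹' {0}), applyVF η (mkOn H hH) ∈ Ideal.span {mkOn H hH} := by
    rw [← IX_preimage_zero_eq_span hn hb]
    exact fun η hη => hη _ ((mkOn_mem_IX hH).2 (.of_forall fun _ hx => hx))
  obtain ⟨α, hα⟩ := Ideal.mem_span_singleton'.1 (hdiv δ hδX)
  have hfh : mId n ^ (a + b) ≤ Jmin n f (mkOn H hH) ⊔ Ideal.span {mkOn H hH} := by
    rw [pow_add]
    exact (Ideal.mul_mono ha hb).trans (BRIdeal_mul_Jac_le f hdiv)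
  have hpos := re_pos_of_isRoot_charpoly hδ0 hf2 hδf ((Ideal.pow_le_pow_right le_self_add).trans hf)
    hHsing hα.symm ((Ideal.pow_le_pow_right le_add_self).trans (hb.trans le_sup_left)) hfh hμ
  exact hneg.not_gt hpos

end BruceRoberts

/-- Claim 4.4: let `f ∈ 𝔪² ∖ 𝔪³` and `h ∈ 𝔪²` have isolated singularities at the origin
and set `X = h⁻¹(0)`. If there is a logarithmic vector field `δ ∈ Θ_X` with `δ(0) = 0`,
`δ(f) = f`, whose eigenvalues are rational with at least one of them non-positive, then
`μ_X(f) = ∞`. -/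
theorem muX_infinite_of_nonpositive_weight (n : ℕ)
    (f : On n) (hf2 : f ∈ (mId n) ^ 2) (hf3 : f ∉ (mId n) ^ 3)
    (hfiso : FiniteDimensional ℂ (On n ⧸ Jac n f))
    (H : (Fin n → ℂ) → ℂ) (hH : AnalyticAt ℂ H 0) (hH0 : H 0 = 0)
    (hHsing : mkOn H hH ∈ (mId n) ^ 2)
    (hHiso : FiniteDimensional ℂ (On n ⧸ Jac n (mkOn H hH)))
    (δ : Fin n → On n) (hδX : δ ∈ ThetaX n (H ⁻¹' {0})) (hδ0 : ∀ i, δ i ∈ mId n)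
    (hδf : applyVF δ f = f)
    (w : Fin n → ℚ) (hw : EigsEq δ w) (hneg : ∃ i, w i ≤ 0) :
    ¬ FiniteDimensional ℂ (On n ⧸ BRIdeal n (H ⁻¹' {0}) f) := by
  obtain ⟨i, hi⟩ := hneg
  have hroot : (linPart δ).charpoly.IsRoot (w i) := by
    rw [hw, isRoot_prod]
    exact ⟨i, Finset.mem_univ i, root_X_sub_C.2 rfl⟩
  exact muX_infinite_of_nonpositive_weight_general hf2 hHsing hHiso hδX hδ0 hδf hroot
    (by rw [Complex.ratCast_re]; exact_mod_cast hi)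

end
end
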